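/- arXiv:2211.16129 — 7 statements merged into one kernel-verified Lean document; each statement's English description precedes it below -/
import Mathlib

section
/- Let V₁₀ be a 10-dimensional complex vector space, σ an alternating trilinear form on V₁₀, and let V₃ ⊆ V₇ ⊆ V₁₀ be subspaces of dimensions 3 and 7 respectively such that σ(V₃, V₇, V₇) = 0. Then there exists a 4-dimensional subspace U₄ with V₃ ⊆ U₄ ⊆ V₇ and σ(U₄, V₇, V₇) = 0. -/
/-!
An alternating form in `k ≥ 1` variables never has rank `k + 1`: its radical cannot have codimension
`k + 1`. If `ω w ≠ 0`, the vectors `v` all of whose substitutions into a slot of `w` are killed by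
`ω` form a complement of the span of `w`, hence a subspace of codimension `k`, and it contains the
radical. Were the radical of codimension `k + 1`, it would be a hyperplane in this subspace; but
then any `v` in the subspace off that hyperplane spans the whole space together with `w` and the
radical, and expanding multilinearly shows that `v` lies in the radical after all.

For `k = 3`, the radical of the restriction of `σ` to `V₇` contains `V₃`, of codimension `4`, so it
is strictly larger.
-/

open Function Module Submodule

section Submodule

variable {K M : Type*} [DivisionRing K] [AddCommGroup M] [Module K M]

theorem exists_eq_sup_span_singleton_of_finrank_quotient {P Q : Submodule K M} (hPQ : P ≤ Q)
    (h : finrank K (M ⧸ P) = finrank K (M ⧸ Q) + 1) : ∃ v ∉ P, Q = P ⊔ span K {v} := by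
  have : FiniteDimensional K (M ⧸ P) := .of_finrank_pos (by omega)
  have hrank : finrank K (Q.map P.mkQ) = 1 := by
    have hquot := (Q.map P.mkQ).finrank_quotient_add_finrank
    rw [(quotientQuotientEquivQuotient P Q hPQ).finrank_eq] at hquot
    omega
  obtain ⟨x, hx⟩ := (finrank_le_one_iff_isPrincipal _).1 hrank.le
  obtain ⟨v, rfl⟩ := P.mkQ_surjective x
  refine ⟨v, fun hv => ?_, ?_⟩
  · have hv0 : P.mkQ v = 0 := (Quotient.mk_eq_zero P).2 hv
    rw [hx, hv0, span_zero_singleton, finrank_bot] at hrank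
    exact zero_ne_one hrank
  · rw [← sup_eq_right.2 hPQ, ← comap_map_mkQ, hx, ← Set.image_singleton, ← map_span,
      comap_map_mkQ]

end Submodule

section UpdateMap

variable {R M N ι : Type*} [CommSemiring R] [AddCommMonoid M] [Module R M] [AddCommMonoid N]
  [Module R N] [DecidableEq ι]

/-- The values of `ω` at `w` with each of its entries in turn replaced by `y`, linear in `y`. For a
scalar-valued `ω` with `ω w = 1` these are the coordinates of a projection onto the span of `w`. -/
def updateMap (ω : M [⋀^ι]→ₗ[R] N) (w : ι → M) : M →ₗ[R] ι → N :=
  LinearMap.pi fun i => ω.toMultilinearMap.toLinearMap w i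

@[simp]
theorem updateMap_apply (ω : M [⋀^ι]→ₗ[R] N) (w : ι → M) (y : M) (i : ι) :
    updateMap ω w y i = ω (update w i y) :=
  rfl

theorem updateMap_apply_self (ω : M [⋀^ι]→ₗ[R] N) (w : ι → M) (j : ι) :
    updateMap ω w (w j) = Pi.single j (ω w) := by
  ext i
  rcases eq_or_ne i j with rfl | hij
  · simp
  · simp [hij, ω.map_update_self w hij]

end UpdateMap

section Projection

variable {K M ι : Type*} [Field K] [AddCommGroup M] [Module K M] [DecidableEq ι]

theorem updateMap_sum_smul [Fintype ι] (ω : M [⋀^ι]→ₗ[K] K) {w : ι → M} (hw : ω w ≠ 0)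
    (c : ι → K) : updateMap ω w (∑ i, (c i / ω w) • w i) = c := by
  simp only [map_sum, map_smul, updateMap_apply_self]
  ext j
  simp [Finset.sum_apply, Pi.single_apply, hw]

theorem ker_updateMap_sup_span_range [Finite ι] (ω : M [⋀^ι]→ₗ[K] K) {w : ι → M} (hw : ω w ≠ 0) :
    LinearMap.ker (updateMap ω w) ⊔ span K (Set.range w) = ⊤ := by
  have := Fintype.ofFinite ι
  refine eq_top_iff'.2 fun y => ?_
  set p := ∑ i, (updateMap ω w y i / ω w) • w i
  have hp : p ∈ span K (Set.range w) :=
    sum_mem fun i _ => smul_mem _ _ (subset_span ⟨i, rfl⟩)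
  have hker : y - p ∈ LinearMap.ker (updateMap ω w) := by
    rw [LinearMap.mem_ker, map_sub, updateMap_sum_smul ω hw, sub_self]
  rw [← sub_add_cancel y p]
  exact add_mem_sup hker hp

end Projection

section CurryLeft

variable {R M N : Type*} [CommRing R] [AddCommGroup M] [Module R M] [AddCommGroup N] [Module R N]
  {n : ℕ}

theorem map_eq_zero_of_mem_ker_curryLeft (ω : M [⋀^Fin (n + 1)]→ₗ[R] N) {x : Fin (n + 1) → M}
    {i : Fin (n + 1)} (hx : x i ∈ LinearMap.ker ω.curryLeft) : ω x = 0 := by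
  have hcons : ω (Matrix.vecCons (x i) (i.removeNth x)) = 0 :=
    DFunLike.congr_fun (LinearMap.mem_ker.1 hx) _
  rw [← Fin.insertNth_self_removeNth i x, AlternatingMap.map_insertNth, hcons, smul_zero]

theorem map_vecCons_comp_eq_zero_of_forall_update (ω : M [⋀^Fin (n + 1)]→ₗ[R] N)
    {w : Fin (n + 1) → M} {v : M} (hv : ∀ i, ω (update w i v) = 0)
    {t : Fin n → Fin (n + 1)} (ht : Injective t) : ω (Matrix.vecCons v (w ∘ t)) = 0 := by
  obtain ⟨k, hk⟩ : ∃ k, k ∉ Set.range t := by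
    by_contra! h
    simpa using Fintype.card_le_of_surjective t h
  have hbij : Bijective (Fin.cons k t : Fin (n + 1) → Fin (n + 1)) :=
    Finite.injective_iff_bijective.1 (Fin.cons_injective_iff.2 ⟨hk, ht⟩)
  have hperm : Matrix.vecCons v (w ∘ t) = update w k v ∘ Equiv.ofBijective _ hbij := by
    funext j
    cases j using Fin.cases with
    | zero => simp
    | succ j => simp [update_of_ne (fun h => hk ⟨j, h⟩)]
  rw [hperm, AlternatingMap.map_perm, hv, smul_zero]

theorem ker_curryLeft_le_ker_updateMap (ω : M [⋀^Fin (n + 1)]→ₗ[R] N) (w : Fin (n + 1) → M) :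
    LinearMap.ker ω.curryLeft ≤ LinearMap.ker (updateMap ω w) := fun y hy =>
  LinearMap.mem_ker.2 <| funext fun i =>
    map_eq_zero_of_mem_ker_curryLeft ω (i := i) (by simpa only [update_self] using hy)

end CurryLeft

section Rank

variable {K M N : Type*} [Field K] [AddCommGroup M] [Module K M] [AddCommGroup N] [Module K N]
  {n : ℕ}

theorem mem_ker_curryLeft_of_forall_update (ω : M [⋀^Fin (n + 1)]→ₗ[K] N)
    {w : Fin (n + 1) → M} {v : M} (hv : ∀ i, ω (update w i v) = 0)
    (hspan : ⊤ ≤ span K (LinearMap.ker ω.curryLeft ∪ insert v (Set.range w))) :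
    v ∈ LinearMap.ker ω.curryLeft := by
  refine LinearMap.mem_ker.2 ((Basis.ofSpan hspan).ext_alternating fun s hs => ?_)
  set e : Fin n → M := fun j => Basis.ofSpan hspan (s j)
  have he : Injective e := (Basis.ofSpan hspan).injective.comp hs
  have hmem (j) : e j ∈ (LinearMap.ker ω.curryLeft : Set M) ∪ insert v (Set.range w) :=
    Basis.ofSpan_subset hspan ⟨s j, rfl⟩
  rw [AlternatingMap.curryLeft_apply_apply, AlternatingMap.zero_apply]
  by_cases hker : ∃ j, e j ∈ LinearMap.ker ω.curryLeft
  · obtain ⟨j, hj⟩ := hker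
    exact map_eq_zero_of_mem_ker_curryLeft ω (i := j.succ) hj
  by_cases hrep : ∃ j, e j = v
  · obtain ⟨j, hj⟩ := hrep
    exact ω.map_eq_zero_of_eq _ (i := 0) (j := j.succ) hj.symm (Fin.succ_ne_zero j).symm
  push Not at hker hrep
  choose t ht using fun j => ((hmem j).resolve_left (hker j)).resolve_left (hrep j)
  have hcomp : w ∘ t = e := funext ht
  have ht_inj : Injective t := .of_comp (f := w) (hcomp ▸ he)
  rw [← hcomp]
  exact map_vecCons_comp_eq_zero_of_forall_update ω hv ht_inj

theorem finrank_quotient_ker_curryLeft_ne (ω : M [⋀^Fin (n + 1)]→ₗ[K] K) :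
    finrank K (M ⧸ LinearMap.ker ω.curryLeft) ≠ n + 2 := by
  intro hrank
  obtain ⟨w, hw⟩ : ∃ w, ω w ≠ 0 := by
    by_contra! h
    obtain rfl : ω = 0 := AlternatingMap.ext h
    rw [AlternatingMap.curryLeft_zero, LinearMap.ker_zero, finrank_zero_of_subsingleton] at hrank
    omega
  have hcodim : finrank K (M ⧸ LinearMap.ker (updateMap ω w)) = n + 1 := by
    have hsurj : Surjective (updateMap ω w) := fun c => ⟨_, updateMap_sum_smul ω hw c⟩
    rw [((updateMap ω w).quotKerEquivOfSurjective hsurj).finrank_eq, finrank_fin_fun]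
  obtain ⟨v, hv, hker⟩ := exists_eq_sup_span_singleton_of_finrank_quotient
    (ker_curryLeft_le_ker_updateMap ω w) (by rw [hrank, hcodim])
  have hvker : v ∈ LinearMap.ker (updateMap ω w) :=
    hker ▸ mem_sup_right (mem_span_singleton_self v)
  refine hv (mem_ker_curryLeft_of_forall_update ω (congrFun (LinearMap.mem_ker.1 hvker)) ?_)
  rw [span_union, span_eq, span_insert, ← sup_assoc, ← hker, ker_updateMap_sup_span_range ω hw]

theorem exists_finrank_eq_succ_of_le_ker_curryLeft (ω : M [⋀^Fin (n + 1)]→ₗ[K] K)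
    {A : Submodule K M} (hA : A ≤ LinearMap.ker ω.curryLeft)
    (hrank : finrank K M = finrank K A + (n + 2)) :
    ∃ U : Submodule K M, finrank K U = finrank K A + 1 ∧ A ≤ U ∧ U ≤ LinearMap.ker ω.curryLeft := by
  have : FiniteDimensional K M := .of_finrank_pos (by omega)
  have hne : A ≠ LinearMap.ker ω.curryLeft := by
    intro h
    have hquot := A.finrank_quotient_add_finrank
    have hne' := finrank_quotient_ker_curryLeft_ne ω
    rw [← h] at hne'
    omega
  obtain ⟨v, hv, hvA⟩ := SetLike.exists_of_lt (hA.lt_of_ne hne)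
  exact ⟨A ⊔ span K {v}, finrank_sup_span_singleton hvA, le_sup_left,
    sup_le hA ((span_singleton_le_iff_mem _ _).2 hv)⟩

end Rank

section Trilinear

variable {R V N : Type*} [CommSemiring R] [AddCommMonoid V] [Module R V] [AddCommMonoid N]
  [Module R N]

/-- The alternating map in three variables given by an alternating curried trilinear form. -/
def alternatingMapOfTrilinear (σ : V →ₗ[R] V →ₗ[R] V →ₗ[R] N)
    (halt : ∀ x y z : V, (x = y ∨ y = z ∨ x = z) → σ x y z = 0) : V [⋀^Fin 3]→ₗ[R] N where
  __ := MultilinearMap.mk' (fun x : Fin 3 → V => σ (x 0) (x 1) (x 2))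
    (fun x i a b => by fin_cases i <;> simp) (fun x i c a => by fin_cases i <;> simp)
  map_eq_zero_of_eq' x i j hx hij := by
    have hpair : x 0 = x 1 ∨ x 1 = x 2 ∨ x 0 = x 2 := by
      match i, j with
      | 0, 1 | 1, 0 | 1, 2 | 2, 1 | 0, 2 | 2, 0 => simp [hx]
      | 0, 0 | 1, 1 | 2, 2 => exact absurd rfl hij
    exact halt _ _ _ hpair

theorem mem_ker_curryLeft_alternatingMapOfTrilinear (σ : V →ₗ[R] V →ₗ[R] V →ₗ[R] N)
    (halt : ∀ x y z : V, (x = y ∨ y = z ∨ x = z) → σ x y z = 0) (B : Submodule R V) (a : B) :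
    a ∈ LinearMap.ker ((alternatingMapOfTrilinear σ halt).compLinearMap B.subtype).curryLeft ↔
      ∀ b ∈ B, ∀ c ∈ B, σ a b c = 0 := by
  rw [LinearMap.mem_ker, AlternatingMap.ext_iff]
  exact ⟨fun h b hb c hc => h ![⟨b, hb⟩, ⟨c, hc⟩], fun h x => h _ (x 0).2 _ (x 1).2⟩

theorem stmt_1_general {K V : Type*} [Field K] [AddCommGroup V] [Module K V]
    (σ : V →ₗ[K] V →ₗ[K] V →ₗ[K] K)
    (halt : ∀ x y z : V, (x = y ∨ y = z ∨ x = z) → σ x y z = 0) {A B : Submodule K V}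
    (hrank : finrank K B = finrank K A + 4) (hAB : A ≤ B)
    (hvan : ∀ a ∈ A, ∀ b ∈ B, ∀ c ∈ B, σ a b c = 0) :
    ∃ U : Submodule K V, finrank K U = finrank K A + 1 ∧ A ≤ U ∧ U ≤ B ∧
      ∀ a ∈ U, ∀ b ∈ B, ∀ c ∈ B, σ a b c = 0 := by
  have hA : finrank K (A.submoduleOf B) = finrank K A := (submoduleOfEquivOfLe hAB).finrank_eq
  obtain ⟨U, hU, hAU, hUker⟩ := exists_finrank_eq_succ_of_le_ker_curryLeft
    ((alternatingMapOfTrilinear σ halt).compLinearMap B.subtype) (A := A.submoduleOf B)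
    (fun a ha => (mem_ker_curryLeft_alternatingMapOfTrilinear σ halt B a).2 (hvan a ha))
    (by rw [hA, hrank])
  refine ⟨U.map B.subtype, ?_, fun a ha => ⟨⟨a, hAB ha⟩, hAU ha, rfl⟩, map_subtype_le B U, ?_⟩
  · rw [finrank_map_subtype_eq, hU, hA]
  · rintro _ ⟨a, ha, rfl⟩
    exact (mem_ker_curryLeft_alternatingMapOfTrilinear σ halt B a).1 (hUker ha)

end Trilinear

/-- If `σ` is an alternating trilinear form on a 10-dimensional complex vector
space and `V₃ ⊆ V₇` are subspaces of dimensions 3 and 7 with `σ(V₃, V₇, V₇) = 0`,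
then there is a 4-dimensional subspace `U₄` with `V₃ ⊆ U₄ ⊆ V₇` and
`σ(U₄, V₇, V₇) = 0`. -/
theorem stmt_1 (V : Type*) [AddCommGroup V] [Module ℂ V] [FiniteDimensional ℂ V]
    (hV : Module.finrank ℂ V = 10)
    (σ : V →ₗ[ℂ] V →ₗ[ℂ] V →ₗ[ℂ] ℂ)
    (halt : ∀ x y z : V, (x = y ∨ y = z ∨ x = z) → σ x y z = 0)
    (V₃ V₇ : Submodule ℂ V) (hV₃ : Module.finrank ℂ V₃ = 3)
    (hV₇ : Module.finrank ℂ V₇ = 7) (h37 : V₃ ≤ V₇)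
    (hvan : ∀ a ∈ V₃, ∀ b ∈ V₇, ∀ c ∈ V₇, σ a b c = 0) :
    ∃ U₄ : Submodule ℂ V, Module.finrank ℂ U₄ = 4 ∧ V₃ ≤ U₄ ∧ U₄ ≤ V₇ ∧
      ∀ a ∈ U₄, ∀ b ∈ V₇, ∀ c ∈ V₇, σ a b c = 0 := by
  simpa only [hV₃] using stmt_1_general σ halt (by rw [hV₃, hV₇]) h37 hvan
end

section
/- Let V₁₀ be a 10-dimensional complex vector space, σ an alternating trilinear form on V₁₀, V₃ ⊆ V₄ ⊆ V₁₀ subspaces of dimensions 3 and 4, and let l₀ ∈ V₄ \ V₃. Assume that σ(l₀, x, y) = 0 for all x, y ∈ V₄, and that the linear map V₃ → V₁₀* sending v to σ(l₀, v, ·) is injective. Let V₇ be a 7-dimensional subspace with V₄ ⊆ V₇ ⊆ V₁₀ and σ(l₀, x, w) = 0 for all x ∈ V₄, w ∈ V₇. Then the rank of the alternating bilinear form σ(l₀, ·, ·) on V₁₀ is at most 6 if and only if σ(l₀, y, z) = 0 for all y, z ∈ V₇. -/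
/-!
Let `B` be a reflexive bilinear form and `U` an isotropic subspace. Then `Uᗮ` contains
`Uᗮᗮ = U ⊔ ker B`, so `Uᗮ` is isotropic precisely when `dim Uᗮ ≤ dim (U ⊔ ker B)`. If `U` meets
`ker B` trivially, this reads `dim V - dim U ≤ dim U + dim V - rank B`, that is,
`rank B ≤ 2 * dim U`. For `B = σ(l₀, ·, ·)` and `U = V₃`, a dimension count identifies `Uᗮ`
with `V₇`.
-/

section ReflexiveForm

open Module LinearMap.BilinForm

variable {K V : Type*} [Field K] [AddCommGroup V] [Module K V]
  {B : LinearMap.BilinForm K V} {U W : Submodule K V}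

theorem ker_le_orthogonal (hB : B.IsRefl) (U : Submodule K V) : B.ker ≤ B.orthogonal U :=
  orthogonal_top_eq_ker hB ▸ orthogonal_le le_top

variable [FiniteDimensional K V]

theorem orthogonal_orthogonal_eq_sup_ker (hB : B.IsRefl) (U : Submodule K V) :
    B.orthogonal (B.orthogonal U) = U ⊔ B.ker := by
  have hle : U ⊔ B.ker ≤ B.orthogonal (B.orthogonal U) :=
    sup_le (le_orthogonal_orthogonal hB) (ker_le_orthogonal hB _)
  refine (Submodule.eq_of_le_of_finrank_eq hle ?_).symm
  have hU := finrank_add_finrank_orthogonal' (B := B) U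
  have hU' := finrank_add_finrank_orthogonal' (B := B) (B.orthogonal U)
  rw [inf_eq_right.mpr (ker_le_orthogonal hB U)] at hU'
  have hsup := Submodule.finrank_sup_add_finrank_inf_eq U B.ker
  omega

theorem orthogonal_isotropic_iff_finrank_range_le (hB : B.IsRefl) (hU : U ≤ B.orthogonal U) :
    B.orthogonal U ≤ B.orthogonal (B.orthogonal U) ↔
      finrank K B.range + 2 * finrank K ↥(U ⊓ B.ker) ≤ 2 * finrank K U := by
  have hle : B.orthogonal (B.orthogonal U) ≤ B.orthogonal U := orthogonal_le hU
  have hdim : B.orthogonal U ≤ B.orthogonal (B.orthogonal U) ↔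
      finrank K (B.orthogonal U) ≤ finrank K (B.orthogonal (B.orthogonal U)) :=
    ⟨Submodule.finrank_mono, fun h ↦ (Submodule.eq_of_le_of_finrank_le hle h).ge⟩
  rw [hdim, orthogonal_orthogonal_eq_sup_ker hB]
  have horth := finrank_add_finrank_orthogonal' (B := B) U
  have hsup := Submodule.finrank_sup_add_finrank_inf_eq U B.ker
  have hrank := B.finrank_range_add_finrank_ker
  omega

theorem eq_orthogonal_of_finrank_le (hW : W ≤ B.orthogonal U)
    (hdim : finrank K V + finrank K ↥(U ⊓ B.ker) ≤ finrank K U + finrank K W) :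
    W = B.orthogonal U := by
  refine Submodule.eq_of_le_of_finrank_le hW ?_
  have horth := finrank_add_finrank_orthogonal' (B := B) U
  omega

theorem stmt_4_general (hB : B.IsRefl) (hUW : U ≤ W) (horth : ∀ u ∈ U, ∀ w ∈ W, B u w = 0)
    (hinj : Function.Injective (B.domRestrict U))
    (hdim : finrank K U + finrank K W = finrank K V) :
    finrank K B.range ≤ 2 * finrank K U ↔ ∀ y ∈ W, ∀ z ∈ W, B y z = 0 := by
  have hker : U ⊓ B.ker = ⊥ :=
    (LinearMap.disjoint_ker_iff_injOn.mpr (Set.injOn_iff_injective.mpr hinj)).eq_bot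
  have hW : W = B.orthogonal U :=
    eq_orthogonal_of_finrank_le (fun w hw u hu ↦ horth u hu w hw) (by simp [hker, hdim])
  have hiso := orthogonal_isotropic_iff_finrank_range_le hB (hUW.trans hW.le)
  rw [← hW, hker, finrank_bot, mul_zero, add_zero] at hiso
  rw [← hiso]
  exact ⟨fun h y hy z hz ↦ h hz y hy, fun h z hz y hy ↦ h y hy z hz⟩

end ReflexiveForm

/-- In the setting of the proof of Theorem 2.1: with `V₃ ⊆ V₄ ⊆ V₇ ⊆ V₁₀` as
constructed there, the rank of the alternating bilinear form `σ(l₀, ·, ·)` is at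
most 6 if and only if `V₇` is isotropic for `σ(l₀, ·, ·)`. -/
theorem stmt_4 (V : Type*) [AddCommGroup V] [Module ℂ V] [FiniteDimensional ℂ V]
    (hV : Module.finrank ℂ V = 10)
    (σ : V →ₗ[ℂ] V →ₗ[ℂ] V →ₗ[ℂ] ℂ)
    (halt : ∀ x y z : V, (x = y ∨ y = z ∨ x = z) → σ x y z = 0)
    (V₃ V₄ V₇ : Submodule ℂ V) (hV₃ : Module.finrank ℂ V₃ = 3)
    (hV₄ : Module.finrank ℂ V₄ = 4) (h34 : V₃ ≤ V₄)
    (l₀ : V) (hl₀ : l₀ ∈ V₄) (hl₀' : l₀ ∉ V₃)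
    (hvan : ∀ x ∈ V₄, ∀ y ∈ V₄, σ l₀ x y = 0)
    (hinj : Function.Injective ((σ l₀).domRestrict V₃))
    (hV₇ : Module.finrank ℂ V₇ = 7) (h47 : V₄ ≤ V₇)
    (hvan7 : ∀ x ∈ V₄, ∀ w ∈ V₇, σ l₀ x w = 0) :
    Module.finrank ℂ (LinearMap.range (σ l₀)) ≤ 6 ↔
      ∀ y ∈ V₇, ∀ z ∈ V₇, σ l₀ y z = 0 := by
  have hσ : LinearMap.IsAlt (σ l₀) := fun y ↦ halt l₀ y y (.inr (.inl rfl))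
  simpa [hV₃] using stmt_4_general hσ.isRefl (h34.trans h47) (fun x hx ↦ hvan7 x (h34 hx)) hinj
    (by rw [hV₃, hV₇, hV])
end

section
/- Let V₁₀ be a 10-dimensional complex vector space, σ an alternating trilinear form on V₁₀, and V₂ ⊆ V₄ ⊆ V₇ ⊆ V₁₀ subspaces of dimensions 2, 4 and 7 such that σ(V₂, V₇, V₇) = 0 and σ(V₄, V₄, V₇) = 0. Then there exists a 6-dimensional subspace U₆ with V₄ ⊆ U₆ ⊆ V₇ such that σ(x, y, z) = 0 for all x, y, z ∈ U₆. -/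
/-!
Write `V₇ = V₄ ⊕ W` and `V₄ = V₂ + ⟨f, g⟩`. The alternating forms `σ(f, ·, ·)` and `σ(g, ·, ·)` on
the three-dimensional space `W` are degenerate, and an alternating form vanishes on every plane that
meets its radical. A plane `P ⊆ W` through a radical vector of each form is therefore isotropic for
both, hence for `σ(a, ·, ·)` with any `a ∈ V₄`. Since an alternating trilinear form vanishes on
every plane, `U₆ = V₄ ⊕ P` works.
-/

open Module Submodule

section Ring

variable {R M N : Type*} [CommRing R] [AddCommGroup M] [Module R M] [AddCommGroup N] [Module R N]

/-- A submodule `P` is totally isotropic for a bilinear map `ω` if `ω` vanishes on `P × P`. -/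
def IsTotallyIsotropic (ω : M →ₗ[R] M →ₗ[R] N) (P : Submodule R M) : Prop :=
  ∀ x ∈ P, ∀ y ∈ P, ω x y = 0

theorem IsTotallyIsotropic.sup {ω : M →ₗ[R] M →ₗ[R] N} (hω : ω.IsAlt) {A P : Submodule R M}
    (hA : IsTotallyIsotropic ω A) (hP : IsTotallyIsotropic ω P)
    (hAP : ∀ a ∈ A, ∀ p ∈ P, ω a p = 0) : IsTotallyIsotropic ω (A ⊔ P) := by
  intro x hx y hy
  obtain ⟨a, ha, p, hp, rfl⟩ := mem_sup.1 hx
  obtain ⟨b, hb, q, hq, rfl⟩ := mem_sup.1 hy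
  have hpb : ω p b = 0 := hω.eq_iff.1 (hAP b hb p hp)
  simp [hA a ha b hb, hAP a ha q hq, hpb, hP p hp q hq]

theorem isTotallyIsotropic_sup_of_trilinear {σ : M →ₗ[R] M →ₗ[R] M →ₗ[R] N}
    (hσ : σ.IsAlt) (hσ' : ∀ x, (σ x).IsAlt) {A P : Submodule R M}
    (hAAA : ∀ a ∈ A, IsTotallyIsotropic (σ a) A)
    (hAAP : ∀ a ∈ A, ∀ b ∈ A, ∀ p ∈ P, σ a b p = 0)
    (hAPP : ∀ a ∈ A, IsTotallyIsotropic (σ a) P)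
    (hPPP : ∀ p ∈ P, IsTotallyIsotropic (σ p) P) :
    ∀ x ∈ A ⊔ P, IsTotallyIsotropic (σ x) (A ⊔ P) := by
  have swap (x y z : M) (h : σ x y z = 0) : σ y x z = 0 := by
    rw [← hσ.neg x y, LinearMap.neg_apply, h, neg_zero]
  have hPA : ∀ p ∈ P, IsTotallyIsotropic (σ p) A := fun p hp a ha b hb =>
    swap a p b ((hσ' a).eq_iff.1 (hAAP a ha b hb p hp))
  intro x hx y hy z hz
  obtain ⟨a, ha, p, hp, rfl⟩ := mem_sup.1 hx
  have haU : σ a y z = 0 := (hAAA a ha).sup (hσ' a) (hAPP a ha) (hAAP a ha) y hy z hz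
  have hpU : σ p y z = 0 := (hPA p hp).sup (hσ' p) (hPPP p hp)
    (fun b hb q hq => swap b p q (hAPP b hb p hp q hq)) y hy z hz
  rw [map_add, LinearMap.add_apply, LinearMap.add_apply, haU, hpU, add_zero]

end Ring

section Field

variable {K V N : Type*} [Field K] [AddCommGroup V] [Module K V] [AddCommGroup N] [Module K N]

theorem isTotallyIsotropic_of_apply_eq_zero_of_finrank_eq_two {ω : V →ₗ[K] V →ₗ[K] N} (hω : ω.IsAlt)
    {P : Submodule K V} (hP : finrank K P = 2) {w : V} (hwP : w ∈ P) (hw : w ≠ 0)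
    (hωw : ∀ y ∈ P, ω w y = 0) : IsTotallyIsotropic ω P := by
  obtain ⟨u, hwu⟩ := exists_linearIndependent_pair_of_one_lt_finrank (R := K) (M := P)
    (by omega) (x := ⟨w, hwP⟩) (by simpa using hw)
  let b := basisOfLinearIndependentOfCardEqFinrank hwu (by simp [hP])
  have hzero : ω.domRestrict₁₂ P P = 0 := by
    refine LinearMap.ext_basis b b fun i j => ?_
    have huw : ω u w = 0 := hω.eq_iff.1 (hωw u u.2)
    fin_cases i <;> fin_cases j <;>
      simp [b, LinearMap.domRestrict₁₂_apply, hω.self_eq_zero, hωw, huw]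
  exact fun x hx y hy => LinearMap.congr_fun₂ hzero ⟨x, hx⟩ ⟨y, hy⟩

theorem isTotallyIsotropic_of_trilinear_of_finrank_eq_two {σ : V →ₗ[K] V →ₗ[K] V →ₗ[K] N}
    (hσ : σ.IsAlt) (hσ' : ∀ x, (σ x).IsAlt) {P : Submodule K V} (hP : finrank K P = 2) :
    ∀ p ∈ P, IsTotallyIsotropic (σ p) P := by
  intro p hp
  obtain rfl | hp0 := eq_or_ne p 0
  · simp [IsTotallyIsotropic]
  · exact isTotallyIsotropic_of_apply_eq_zero_of_finrank_eq_two (hσ' p) hP hp hp0 fun y _ => by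
      rw [hσ.self_eq_zero, LinearMap.zero_apply]

theorem exists_ne_zero_apply_eq_zero_of_isAlt_of_odd_finrank {ω : V →ₗ[K] V →ₗ[K] K} (hω : ω.IsAlt)
    (hV : Odd (finrank K V)) : ∃ w ≠ 0, ω w = 0 := by
  induction hn : finrank K V using Nat.strong_induction_on generalizing V with
  | _ n ih =>
  have : FiniteDimensional K V := FiniteDimensional.of_finrank_pos hV.pos
  have : Nontrivial V := finrank_pos_iff.1 hV.pos
  by_cases hzero : ω = 0
  · simpa [hzero] using exists_ne (0 : V)
  -- Split off the hyperbolic plane `⟨u, v⟩`; its orthogonal complement is the kernel of `φ`.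
  obtain ⟨u, v, huv⟩ : ∃ u v, ω u v ≠ 0 := by
    contrapose! hzero
    exact LinearMap.ext₂ hzero
  let φ : V →ₗ[K] K × K := (ω u).prod (ω v)
  have hspan (c : K × K) : ∃ α β : K, φ (α • u + β • v) = c := by
    refine ⟨-c.2 / ω u v, c.1 / ω u v, ?_⟩
    ext <;> simp [φ, hω.self_eq_zero, ← hω.neg u v, huv]
  have hker : finrank K (LinearMap.ker φ) + 2 = finrank K V := by
    have hrange : LinearMap.range φ = ⊤ :=
      LinearMap.range_eq_top.2 fun c => (hspan c).elim fun α ⟨β, h⟩ => ⟨_, h⟩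
    rw [← φ.finrank_range_add_finrank_ker, hrange]
    simp [add_comm]
  obtain ⟨w, hw, hωw⟩ := ih _ (by omega)
    (ω := ω.domRestrict₁₂ (LinearMap.ker φ) (LinearMap.ker φ)) (fun x => hω x)
    (by rw [← hker] at hV; simpa [Nat.odd_add] using hV) rfl
  refine ⟨w, by simpa using hw, LinearMap.ext fun x => ?_⟩
  obtain ⟨α, β, hx⟩ := hspan (φ x)
  have hwx : ω w (x - (α • u + β • v)) = 0 :=
    LinearMap.congr_fun hωw ⟨x - (α • u + β • v), by rw [LinearMap.mem_ker, map_sub, hx, sub_self]⟩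
  have hwu : ω w u = 0 := hω.eq_iff.1 (congrArg Prod.fst w.2)
  have hwv : ω w v = 0 := hω.eq_iff.1 (congrArg Prod.snd w.2)
  simpa [hwu, hwv] using hwx

theorem exists_finrank_eq_two_isTotallyIsotropic_pair {ω₁ ω₂ : V →ₗ[K] V →ₗ[K] K}
    (hω₁ : ω₁.IsAlt) (hω₂ : ω₂.IsAlt) (hV : finrank K V = 3) :
    ∃ P : Submodule K V, finrank K P = 2 ∧ IsTotallyIsotropic ω₁ P ∧ IsTotallyIsotropic ω₂ P := by
  have : FiniteDimensional K V := FiniteDimensional.of_finrank_pos (by omega)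
  have hodd : Odd (finrank K V) := hV ▸ by decide
  obtain ⟨w₁, hw₁, hωw₁⟩ := exists_ne_zero_apply_eq_zero_of_isAlt_of_odd_finrank hω₁ hodd
  obtain ⟨w₂, hw₂, hωw₂⟩ := exists_ne_zero_apply_eq_zero_of_isAlt_of_odd_finrank hω₂ hodd
  have hlt : span K {w₁, w₂} < ⊤ := by
    classical
    have hcard := finrank_span_finset_le_card (R := K) ({w₁, w₂} : Finset V)
    have htwo := Finset.card_le_two (a := w₁) (b := w₂)
    rw [Finset.coe_pair, Set.finrank] at hcard
    exact lt_top_of_finrank_lt_finrank (by omega)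
  obtain ⟨φ, hφ, hwφ⟩ := exists_le_ker_of_lt_top _ hlt
  have hP : finrank K (LinearMap.ker φ) = 2 := by
    have := Dual.finrank_ker_add_one_of_ne_zero hφ
    omega
  refine ⟨LinearMap.ker φ, hP, ?_, ?_⟩
  · exact isTotallyIsotropic_of_apply_eq_zero_of_finrank_eq_two hω₁ hP
      (hwφ (subset_span (by simp))) hw₁ (by simp [hωw₁])
  · exact isTotallyIsotropic_of_apply_eq_zero_of_finrank_eq_two hω₂ hP
      (hwφ (subset_span (by simp))) hw₂ (by simp [hωw₂])

theorem exists_le_finrank_eq_two_isTotallyIsotropic_pair {ω₁ ω₂ : V →ₗ[K] V →ₗ[K] K}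
    (hω₁ : ω₁.IsAlt) (hω₂ : ω₂.IsAlt) {W : Submodule K V} (hW : finrank K W = 3) :
    ∃ P ≤ W, finrank K P = 2 ∧ IsTotallyIsotropic ω₁ P ∧ IsTotallyIsotropic ω₂ P := by
  obtain ⟨Q, hQ, hQ₁, hQ₂⟩ := exists_finrank_eq_two_isTotallyIsotropic_pair
    (ω₁ := ω₁.domRestrict₁₂ W W) (ω₂ := ω₂.domRestrict₁₂ W W) (fun x => hω₁ x) (fun x => hω₂ x) hW
  refine ⟨Q.map W.subtype, map_subtype_le W Q, (finrank_map_subtype_eq W Q).trans hQ, ?_, ?_⟩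
  · rintro _ ⟨x, hx, rfl⟩ _ ⟨y, hy, rfl⟩
    exact hQ₁ x hx y hy
  · rintro _ ⟨x, hx, rfl⟩ _ ⟨y, hy, rfl⟩
    exact hQ₂ x hx y hy

theorem finrank_sup_of_disjoint {A C : Submodule K V} [FiniteDimensional K A]
    [FiniteDimensional K C] (h : Disjoint A C) :
    finrank K ↥(A ⊔ C) = finrank K A + finrank K C := by
  rw [← finrank_sup_add_finrank_inf_eq, h.eq_bot, finrank_bot, add_zero]

theorem exists_disjoint_sup_eq_of_finrank_eq_add {A B : Submodule K V} [FiniteDimensional K B]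
    {n : ℕ} (hAB : A ≤ B) (h : finrank K B = finrank K A + n) :
    ∃ C : Submodule K V, Disjoint A C ∧ A ⊔ C = B ∧ finrank K C = n := by
  obtain ⟨C, hAC, rfl⟩ := IsModularLattice.exists_disjoint_and_sup_eq hAB
  have : FiniteDimensional K A := finiteDimensional_of_le hAB
  have : FiniteDimensional K C := finiteDimensional_of_le (le_sup_right : C ≤ A ⊔ C)
  rw [finrank_sup_of_disjoint hAC] at h
  exact ⟨C, hAC, rfl, by omega⟩

theorem exists_sup_span_range_eq_of_finrank_eq_add {A B : Submodule K V} [FiniteDimensional K B]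
    {n : ℕ} (hAB : A ≤ B) (h : finrank K B = finrank K A + n) :
    ∃ v : Fin n → V, A ⊔ span K (Set.range v) = B := by
  obtain ⟨C, -, hC, hn⟩ := exists_disjoint_sup_eq_of_finrank_eq_add hAB h
  have : FiniteDimensional K C := finiteDimensional_of_le (hC ▸ le_sup_right)
  let b := finBasisOfFinrankEq K C hn
  refine ⟨C.subtype ∘ b, ?_⟩
  rw [Set.range_comp, span_image, b.span_eq, Submodule.map_top, range_subtype, hC]

theorem stmt_6_general (σ : V →ₗ[K] V →ₗ[K] V →ₗ[K] K) (hσ : σ.IsAlt) (hσ' : ∀ x, (σ x).IsAlt)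
    {A' A B : Submodule K V} (hA : finrank K A = finrank K A' + 2)
    (hB : finrank K B = finrank K A + 3) (hA'A : A' ≤ A) (hAB : A ≤ B)
    (hA'BB : ∀ a ∈ A', ∀ b ∈ B, ∀ c ∈ B, σ a b c = 0)
    (hAAB : ∀ a ∈ A, ∀ b ∈ A, ∀ c ∈ B, σ a b c = 0) :
    ∃ U : Submodule K V, finrank K U = finrank K A + 2 ∧ A ≤ U ∧ U ≤ B ∧
      ∀ x ∈ U, ∀ y ∈ U, ∀ z ∈ U, σ x y z = 0 := by
  have : FiniteDimensional K B := FiniteDimensional.of_finrank_pos (by omega)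
  have : FiniteDimensional K A := finiteDimensional_of_le hAB
  obtain ⟨v, hv⟩ := exists_sup_span_range_eq_of_finrank_eq_add hA'A hA
  obtain ⟨W, hAW, hAWB, hW⟩ := exists_disjoint_sup_eq_of_finrank_eq_add hAB hB
  obtain ⟨P, hPW, hP, hPv⟩ :=
    exists_le_finrank_eq_two_isTotallyIsotropic_pair (hσ' (v 0)) (hσ' (v 1)) hW
  have hPB : P ≤ B := hPW.trans (hAWB ▸ le_sup_right)
  have : FiniteDimensional K P := finiteDimensional_of_le hPB
  have hAPP : ∀ a ∈ A, IsTotallyIsotropic (σ a) P := by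
    intro a ha x hx y hy
    have hle : A' ⊔ span K (Set.range v) ≤ LinearMap.ker ((σ.flip x).flip y) := by
      refine sup_le (fun a ha => hA'BB a ha x (hPB hx) y (hPB hy)) (span_le.2 ?_)
      rintro _ ⟨i, rfl⟩
      fin_cases i
      exacts [hPv.1 x hx y hy, hPv.2 x hx y hy]
    exact hle (hv ▸ ha)
  refine ⟨A ⊔ P, ?_, le_sup_left, sup_le hAB hPB,
    isTotallyIsotropic_sup_of_trilinear hσ hσ' (fun a ha b hb c hc => hAAB a ha b hb c (hAB hc))
      (fun a ha b hb p hp => hAAB a ha b hb p (hPB hp)) hAPP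
      (isTotallyIsotropic_of_trilinear_of_finrank_eq_two hσ hσ' hP)⟩
  rw [finrank_sup_of_disjoint (hAW.mono_right hPW), hP]

end Field

/-- In the proof of Theorem 2.1: if `V₂ ⊆ V₄ ⊆ V₇` have dimensions 2, 4, 7 with
`σ(V₂, V₇, V₇) = 0` and `σ(V₄, V₄, V₇) = 0`, then there is a 6-dimensional `U₆`
with `V₄ ⊆ U₆ ⊆ V₇` on which `σ` vanishes identically. -/
theorem stmt_6 (V : Type*) [AddCommGroup V] [Module ℂ V] [FiniteDimensional ℂ V]
    (hV : Module.finrank ℂ V = 10)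
    (σ : V →ₗ[ℂ] V →ₗ[ℂ] V →ₗ[ℂ] ℂ)
    (halt : ∀ x y z : V, (x = y ∨ y = z ∨ x = z) → σ x y z = 0)
    (V₂ V₄ V₇ : Submodule ℂ V)
    (hV₂ : Module.finrank ℂ V₂ = 2) (hV₄ : Module.finrank ℂ V₄ = 4)
    (hV₇ : Module.finrank ℂ V₇ = 7) (h24 : V₂ ≤ V₄) (h47 : V₄ ≤ V₇)
    (hvan2 : ∀ a ∈ V₂, ∀ b ∈ V₇, ∀ c ∈ V₇, σ a b c = 0)
    (hvan4 : ∀ a ∈ V₄, ∀ b ∈ V₄, ∀ c ∈ V₇, σ a b c = 0) :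
    ∃ U₆ : Submodule ℂ V, Module.finrank ℂ U₆ = 6 ∧ V₄ ≤ U₆ ∧ U₆ ≤ V₇ ∧
      ∀ x ∈ U₆, ∀ y ∈ U₆, ∀ z ∈ U₆, σ x y z = 0 := by
  have hσ : σ.IsAlt := fun x => LinearMap.ext fun z => halt x x z (.inl rfl)
  have hσ' (x : V) : (σ x).IsAlt := fun y => halt x y y (.inr (.inl rfl))
  simpa only [hV₄] using
    stmt_6_general σ hσ hσ' (by omega) (by omega) h24 h47 hvan2 hvan4
end

section
/- Let V₁₀ be a 10-dimensional complex vector space, σ an alternating trilinear form on V₁₀, v₁ a nonzero vector, and V₆ ⊆ V₁₀ a 6-dimensional subspace with v₁ ∈ V₆ and σ(v₁, y, z) = 0 for all y ∈ V₆, z ∈ V₁₀. Then there exists a symmetric trilinear form T : V₆ × V₆ × V₆ → ℂ such that for every v ∈ V₆ with v ∉ ℂv₁, one has T(v, v, v) = 0 if and only if the rank of the alternating bilinear form σ(v, ·, ·) on V₁₀ is at most 6. (Equivalently, the locus X₁^σ ∩ P(V₆) is cut out, away from [v₁], by a single homogeneous cubic equation on V₆.) -/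
/-! Let `x` be the coordinate vector of `v ∈ V₆` modulo `v₁`, and let `M` be the Gram matrix of
`σ(v, ·, ·)` on `V₁₀ / ℂv₁`: a 9 × 9 alternating matrix of linear forms in `x` with `M x = 0`.
Its principal 8 × 8 minors `adj(M) i i` are squares (of Pfaffians), and `M x = 0` forces
`x j ^ 2 * adj(M) i i = x i ^ 2 * adj(M) j j`. By unique factorization `adj(M) i i = (x i * C) ^ 2`
for a single cubic form `C`. When `x i ≠ 0`, discarding the `i`-th basis vector and `v₁` leaves a
complement of a subspace of the radical of `σ(v, ·, ·)`, so `C(v) = 0` exactly when this form of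
even rank at most 8 is degenerate on the complement, that is, of rank at most 6. The trilinear form
is the polarization of `C`. -/

open Matrix

/-- Alternating matrices: the Gram matrices of alternating bilinear forms. The condition on the
diagonal is part of the definition because skew-symmetry does not imply it in characteristic two. -/
structure IsAltMatrix {ι R : Type*} [Ring R] (A : Matrix ι ι R) : Prop where
  transpose_eq_neg : Aᵀ = -A
  diag_eq_zero : ∀ i, A i i = 0

namespace IsAltMatrix

section Basic

variable {ι κ R S : Type*} [CommRing R] [CommRing S] {A B : Matrix ι ι R}

theorem apply_swap (hA : IsAltMatrix A) (i j : ι) : A i j = -A j i :=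
  congr_fun₂ hA.transpose_eq_neg j i

theorem neg (hA : IsAltMatrix A) : IsAltMatrix (-A) :=
  ⟨by rw [transpose_neg, hA.transpose_eq_neg], fun i => by simp [hA.diag_eq_zero i]⟩

theorem add (hA : IsAltMatrix A) (hB : IsAltMatrix B) : IsAltMatrix (A + B) :=
  ⟨by rw [transpose_add, hA.transpose_eq_neg, hB.transpose_eq_neg, neg_add],
    fun i => by simp [hA.diag_eq_zero i, hB.diag_eq_zero i]⟩

theorem submatrix (hA : IsAltMatrix A) (f : κ → ι) : IsAltMatrix (A.submatrix f f) :=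
  ⟨by rw [transpose_submatrix, hA.transpose_eq_neg, submatrix_neg]; rfl,
    fun _ => hA.diag_eq_zero _⟩

theorem map (hA : IsAltMatrix A) (f : R →+* S) : IsAltMatrix (A.map f) :=
  ⟨by ext i j; simp [hA.apply_swap j i], fun i => by simp [hA.diag_eq_zero i]⟩

theorem dotProduct_mulVec_self [Fintype ι] (hA : IsAltMatrix A) (x : ι → R) :
    x ⬝ᵥ A *ᵥ x = 0 := by
  classical
  have expand : x ⬝ᵥ A *ᵥ x = ∑ p : ι × ι, x p.1 * (A p.1 p.2 * x p.2) := by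
    simp only [dotProduct, mulVec, Finset.mul_sum, Fintype.sum_prod_type]
  rw [expand]
  refine Finset.sum_involution (fun p _ => p.swap) (fun p _ => ?_) (fun p _ hp hswap => hp ?_)
    (fun _ _ => Finset.mem_univ _) (fun p _ => p.swap_swap)
  · rw [Prod.fst_swap, Prod.snd_swap, hA.apply_swap p.2 p.1]
    ring
  · rw [show p.2 = p.1 from congr_arg Prod.fst hswap, hA.diag_eq_zero, zero_mul, mul_zero]

theorem mul_mul_transpose [Fintype ι] (hA : IsAltMatrix A) (P : Matrix κ ι R) :
    IsAltMatrix (P * A * Pᵀ) where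
  transpose_eq_neg := by
    rw [transpose_mul, transpose_mul, transpose_transpose, hA.transpose_eq_neg, Matrix.neg_mul,
      Matrix.mul_neg, Matrix.mul_assoc]
  diag_eq_zero i := by
    rw [Matrix.mul_assoc, mul_apply_eq_vecMul]
    exact hA.dotProduct_mulVec_self (P i)

theorem inv [Fintype ι] [DecidableEq ι] (hA : IsAltMatrix A) (hdet : IsUnit A.det) :
    IsAltMatrix A⁻¹ := by
  have hmul : A * A⁻¹ᵀ = -1 := by
    rw [← neg_eq_iff_eq_neg, ← Matrix.neg_mul, ← hA.transpose_eq_neg, ← transpose_mul,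
      nonsing_inv_mul A hdet, transpose_one]
  have hcongr : A⁻¹ = -(A⁻¹ * A * A⁻¹ᵀ) := by
    rw [Matrix.mul_assoc, hmul, Matrix.mul_neg, Matrix.mul_one, neg_neg]
  rw [hcongr]
  exact (hA.mul_mul_transpose A⁻¹).neg

theorem schurComplement [Fintype ι] [DecidableEq ι] {M : Matrix (ι ⊕ κ) (ι ⊕ κ) R}
    (hM : IsAltMatrix M) (hdet : IsUnit M.toBlocks₁₁.det) :
    IsAltMatrix (M.toBlocks₂₂ - M.toBlocks₂₁ * M.toBlocks₁₁⁻¹ * M.toBlocks₁₂) := by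
  have htranspose : M.toBlocks₁₂ = -M.toBlocks₂₁ᵀ := by
    ext i k
    exact hM.apply_swap (Sum.inl i) (Sum.inr k)
  rw [htranspose, Matrix.mul_neg, sub_neg_eq_add]
  exact (hM.submatrix Sum.inr).add (((hM.submatrix Sum.inl).inv hdet).mul_mul_transpose _)

end Basic

section Field

universe u

variable {ι : Type u} {K : Type*} [Fintype ι] [DecidableEq ι] [Field K]

theorem exists_det_eq_sq_mul_det_of_sum {κ : Type*} [Fintype κ] [DecidableEq κ]
    {A : Matrix (Fin 2 ⊕ κ) (Fin 2 ⊕ κ) K} (hA : IsAltMatrix A)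
    (hne : A (Sum.inl 0) (Sum.inl 1) ≠ 0) :
    ∃ B : Matrix κ κ K, IsAltMatrix B ∧ A.det = A (Sum.inl 0) (Sum.inl 1) ^ 2 * B.det := by
  have hdet : A.toBlocks₁₁.det = A (Sum.inl 0) (Sum.inl 1) ^ 2 := by
    rw [det_fin_two]
    simp only [toBlocks₁₁, of_apply, hA.diag_eq_zero, hA.apply_swap (Sum.inl 1) (Sum.inl 0)]
    ring
  have hunit : IsUnit A.toBlocks₁₁.det := hdet ▸ (pow_ne_zero 2 hne).isUnit
  refine ⟨_, hA.schurComplement hunit, ?_⟩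
  let := invertibleOfIsUnitDet _ hunit
  conv_lhs => rw [← fromBlocks_toBlocks A]
  rw [det_fromBlocks₁₁, hdet, invOf_eq_nonsing_inv]

/-- A nonzero alternating matrix splits off a hyperbolic plane. -/
theorem exists_det_eq_sq_mul_det {A : Matrix ι ι K} (hA : IsAltMatrix A) (hne : A ≠ 0) :
    ∃ (κ : Type u) (_ : Fintype κ) (_ : DecidableEq κ) (a : K) (B : Matrix κ κ K),
      Fintype.card κ + 2 = Fintype.card ι ∧ IsAltMatrix B ∧ A.det = a ^ 2 * B.det := by
  classical
  obtain ⟨i, j, hij⟩ : ∃ i j, A i j ≠ 0 := by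
    by_contra! hforall
    exact hne (ext hforall)
  have hinj : Function.Injective ![i, j] := by
    have hne_index : i ≠ j := fun h => hij (h ▸ hA.diag_eq_zero i)
    simpa [Function.Injective, Fin.forall_fin_two] using ⟨hne_index, hne_index.symm⟩
  let e : Fin 2 ⊕ ↥(Set.range ![i, j])ᶜ ≃ ι :=
    ((Equiv.ofInjective _ hinj).sumCongr (Equiv.refl _)).trans (Equiv.Set.sumCompl _)
  obtain ⟨B, hB, hdet⟩ := (hA.submatrix e).exists_det_eq_sq_mul_det_of_sum hij
  refine ⟨_, _, _, A i j, B, ?_, hB, (det_submatrix_equiv_self e A).symm.trans hdet⟩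
  rw [← Fintype.card_congr e, Fintype.card_sum, Fintype.card_fin, add_comm]

theorem even_card_and_isSquare_det {A : Matrix ι ι K} (hA : IsAltMatrix A) (hdet : A.det ≠ 0) :
    Even (Fintype.card ι) ∧ IsSquare A.det := by
  induction hn : Fintype.card ι using Nat.strong_induction_on generalizing ι with
  | _ n ih =>
    by_cases hzero : A = 0
    · have : IsEmpty ι := not_nonempty_iff.mp fun _ => hdet (hzero ▸ det_zero)
      simp [← hn]
    · obtain ⟨κ, _, _, a, B, hcard, hB, hAB⟩ := hA.exists_det_eq_sq_mul_det hzero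
      rw [hAB] at hdet
      obtain ⟨heven, hsquare⟩ :=
        ih _ (by lia) hB (right_ne_zero_of_mul hdet) rfl
      rw [hAB, ← hn, ← hcard]
      exact ⟨heven.add even_two, (IsSquare.sq a).mul hsquare⟩

end Field

section Domain

variable {ι R : Type*} [Fintype ι] [DecidableEq ι] [CommRing R] [IsDomain R] {A : Matrix ι ι R}

/-- The square root is, up to sign, the Pfaffian. -/
theorem isSquare_det [IsIntegrallyClosed R] (hA : IsAltMatrix A) : IsSquare A.det := by
  rcases eq_or_ne A.det 0 with hzero | hne
  · exact hzero ▸ IsSquare.zero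
  let f := algebraMap R (FractionRing R)
  have hmap : f A.det = (A.map f).det := f.map_det A
  have hinj : Function.Injective f := IsFractionRing.injective R (FractionRing R)
  have hne' : (A.map f).det ≠ 0 := by
    rw [← hmap]
    exact (map_ne_zero_iff f hinj).mpr hne
  obtain ⟨y, hy⟩ := ((hA.map f).even_card_and_isSquare_det hne').2.exists_sq
  obtain ⟨z, rfl⟩ : ∃ z, f z = y :=
    IsIntegrallyClosed.exists_algebraMap_eq_of_isIntegral_pow two_pos
      (hy ▸ hmap ▸ isIntegral_algebraMap)
  exact ⟨z, hinj (by rw [hmap, hy, map_mul, sq])⟩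

end Domain
end IsAltMatrix

section Adjugate

variable {ι R : Type*} [Fintype ι] [DecidableEq ι] [CommRing R]

theorem adjugate_diag_eq_det_submatrix (A : Matrix ι ι R) (j : ι) :
    A.adjugate j j =
      (A.submatrix Subtype.val Subtype.val : Matrix {i // i ≠ j} {i // i ≠ j} R).det := by
  have hzero : ∀ i, ¬i ≠ j → ∀ k, k ≠ j → A.updateRow j (Pi.single j 1) i k = 0 := by
    rintro i hi k hk
    rw [not_not.mp hi, updateRow_self, Pi.single_eq_of_ne hk]
  have hone : (A.updateRow j (Pi.single j 1)).toSquareBlockProp (¬· ≠ j) = 1 := by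
    ext ⟨i, hi⟩ ⟨k, hk⟩
    obtain rfl := not_not.mp hi
    obtain rfl := not_not.mp hk
    simp [toSquareBlockProp]
  rw [adjugate_apply, twoBlockTriangular_det _ (· ≠ j) hzero, hone, det_one, mul_one]
  congr 1
  ext i k
  rw [toSquareBlockProp_def, of_apply, updateRow_ne i.prop, submatrix_apply]

theorem mul_adjugate_apply_of_mulVec_eq_zero {A : Matrix ι ι R} {x : ι → R} (hx : A *ᵥ x = 0)
    (i j l : ι) : x j * A.adjugate i l = x i * A.adjugate j l := by
  have hmulVec : A.updateRow l (Pi.single j 1) *ᵥ x = Pi.single l (x j) := by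
    ext k
    rcases eq_or_ne k l with rfl | hk
    · simp [mulVec]
    · simpa [mulVec, hk] using congr_fun hx k
  have hrow := congr_fun (congr_arg ((A.updateRow l (Pi.single j 1)).adjugate *ᵥ ·) hmulVec) i
  simp only [mulVec_mulVec, adjugate_mul, smul_mulVec, one_mulVec, mulVec_single, Pi.smul_apply,
    col_apply, smul_eq_mul, op_smul_eq_smul] at hrow
  simpa [adjugate_apply, mul_comm] using hrow.symm

theorem sq_mul_adjugate_diag_of_mulVec_eq_zero {A : Matrix ι ι R} {x : ι → R} (hx : A *ᵥ x = 0)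
    (hx' : x ᵥ* A = 0) (i j : ι) : x j ^ 2 * A.adjugate i i = x i ^ 2 * A.adjugate j j := by
  have hcol := mul_adjugate_apply_of_mulVec_eq_zero hx i j i
  have hrow := mul_adjugate_apply_of_mulVec_eq_zero ((mulVec_transpose A x).trans hx') i j j
  rw [← adjugate_transpose, transpose_apply, transpose_apply] at hrow
  linear_combination x j * hcol + x i * hrow

end Adjugate

section Homogeneous

open MvPolynomial

variable {α R : Type*} [CommRing R]

theorem isHomogeneous_det {ι : Type*} [Fintype ι] [DecidableEq ι]
    {A : Matrix ι ι (MvPolynomial α R)} {n : ℕ}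
    (hA : ∀ i j, (A i j).IsHomogeneous n) : A.det.IsHomogeneous (Fintype.card ι * n) := by
  rw [det_apply]
  refine IsHomogeneous.sum _ _ _ fun s _ => Submodule.smul_of_tower_mem
    (homogeneousSubmodule α R (Fintype.card ι * n)) _ ?_
  rw [mem_homogeneousSubmodule]
  simpa using IsHomogeneous.prod Finset.univ _ (fun _ => n) fun i _ => hA (s i) i

/-- The substitution `X i ↦ X i * t`, which separates a polynomial into its homogeneous components,
the one of degree `n` being the coefficient of `t ^ n`. -/
noncomputable def scaleVariables : MvPolynomial α R →ₐ[R] Polynomial (MvPolynomial α R) :=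
  aeval fun i => Polynomial.C (X i) * Polynomial.X

theorem scaleVariables_monomial (s : α →₀ ℕ) (r : R) :
    scaleVariables (monomial s r) = Polynomial.monomial s.degree (monomial s r) := by
  rw [scaleVariables, aeval_monomial, Polynomial.algebraMap_apply, algebraMap_eq,
    ← Polynomial.C_mul_X_pow_eq_monomial, monomial_eq, map_mul, Finsupp.degree_apply]
  simp only [Finsupp.prod, mul_pow, Finset.prod_mul_distrib, Finset.prod_pow_eq_pow_sum,
    map_prod, map_pow, mul_assoc]

theorem coeff_scaleVariables (p : MvPolynomial α R) (n : ℕ) :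
    (scaleVariables p).coeff n = homogeneousComponent n p := by
  induction p using MvPolynomial.induction_on' with
  | monomial s r =>
    rw [scaleVariables_monomial, Polynomial.coeff_monomial,
      homogeneousComponent_of_mem (isHomogeneous_monomial r rfl)]
    simp only [eq_comm]
  | add p q hp hq => rw [map_add, Polynomial.coeff_add, hp, hq, map_add]

theorem isHomogeneous_iff_scaleVariables_eq {p : MvPolynomial α R} {n : ℕ} :
    p.IsHomogeneous n ↔ scaleVariables p = Polynomial.monomial n p := by
  refine ⟨fun hp => ?_, fun hp => ?_⟩
  · ext1 m
    rw [coeff_scaleVariables, homogeneousComponent_of_mem hp, Polynomial.coeff_monomial]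
    simp only [eq_comm]
  · have hcomponent := homogeneousComponent_isHomogeneous n p
    rwa [← coeff_scaleVariables, hp, Polynomial.coeff_monomial_same] at hcomponent

variable [IsDomain R] {p q : MvPolynomial α R} {m n : ℕ}

theorem isHomogeneous_of_sq (hp : (p ^ 2).IsHomogeneous (n * 2)) : p.IsHomogeneous n := by
  rw [isHomogeneous_iff_scaleVariables_eq, map_pow, ← Polynomial.monomial_pow,
    sq_eq_sq_iff_eq_or_eq_neg] at hp
  have hcomponent := homogeneousComponent_isHomogeneous n p
  rcases hp with hp | hp
  · exact isHomogeneous_iff_scaleVariables_eq.mpr hp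
  · rw [← coeff_scaleVariables, hp, Polynomial.coeff_neg, Polynomial.coeff_monomial_same]
      at hcomponent
    exact neg_neg p ▸ hcomponent.neg

theorem isHomogeneous_right_of_mul (hp : p.IsHomogeneous m) (hp0 : p ≠ 0)
    (hpq : (p * q).IsHomogeneous (m + n)) : q.IsHomogeneous n := by
  rw [isHomogeneous_iff_scaleVariables_eq] at hp hpq ⊢
  rw [map_mul, hp, ← Polynomial.monomial_mul_monomial] at hpq
  exact mul_left_cancel₀ (by simpa using hp0) hpq

end Homogeneous

section AlternatingAdjugate

variable {ι R : Type*} [Fintype ι] [DecidableEq ι] [CommRing R] [IsDomain R] {A : Matrix ι ι R}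

theorem IsAltMatrix.isSquare_adjugate_diag [IsIntegrallyClosed R] (hA : IsAltMatrix A) (i : ι) :
    IsSquare (A.adjugate i i) :=
  adjugate_diag_eq_det_submatrix A i ▸ (hA.submatrix _).isSquare_det

theorem IsAltMatrix.exists_adjugate_diag_eq [IsIntegrallyClosed R] (hA : IsAltMatrix A)
    {x : ι → R} (hx : A *ᵥ x = 0) {i j : ι} (hi : Prime (x i)) (hij : ¬x i ∣ x j) :
    ∃ p, ∀ k, A.adjugate k k = (x k * p) ^ 2 := by
  have hx' : x ᵥ* A = 0 := by
    rw [← mulVec_transpose, hA.transpose_eq_neg, neg_mulVec, hx, neg_zero]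
  have hadj := sq_mul_adjugate_diag_of_mulVec_eq_zero hx hx'
  obtain ⟨f, hf⟩ := (hA.isSquare_adjugate_diag i).exists_sq
  have hdvd : x i ∣ x j * f := by
    refine hi.dvd_of_dvd_pow (n := 2) ?_
    rw [mul_pow, ← hf, hadj i j, sq, mul_assoc]
    exact dvd_mul_right _ _
  obtain ⟨p, rfl⟩ := (hi.dvd_or_dvd hdvd).resolve_left hij
  refine ⟨p, fun k => mul_left_cancel₀ (pow_ne_zero 2 hi.ne_zero) ?_⟩
  rw [hadj k i, hf]
  ring

open MvPolynomial in
/-- The polynomial `p` is the common factor of the Pfaffians of the principal submatrices of `A`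
obtained by deleting one row and the corresponding column. -/
theorem IsAltMatrix.exists_isHomogeneous_adjugate_diag_eq {α : Type*}
    [UniqueFactorizationMonoid R] {A : Matrix ι ι (MvPolynomial α R)} (hA : IsAltMatrix A)
    (hlin : ∀ i j, (A i j).IsHomogeneous 1) {d : ℕ} (hcard : Fintype.card ι = 2 * d + 3)
    {x : ι → MvPolynomial α R} (hx : A *ᵥ x = 0) {i j : ι} {a b : α} (hi : x i = X a)
    (hj : x j = X b) (hab : a ≠ b) :
    ∃ p : MvPolynomial α R, p.IsHomogeneous d ∧ ∀ k, A.adjugate k k = (x k * p) ^ 2 := by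
  have hndvd : ¬x i ∣ x j := by
    rwa [hi, hj, X_dvd_X]
  obtain ⟨p, hp⟩ := hA.exists_adjugate_diag_eq hx (hi ▸ X_prime) hndvd
  refine ⟨p, ?_, hp⟩
  have hhomog : ((X a * p) ^ 2).IsHomogeneous ((1 + d) * 2) := by
    have hsize : Fintype.card {k // k ≠ i} * 1 = (1 + d) * 2 := by
      rw [Fintype.card_subtype_compl, Fintype.card_subtype_eq, hcard]
      lia
    rw [← hi, ← hp, adjugate_diag_eq_det_submatrix, ← hsize]
    exact isHomogeneous_det fun _ _ => hlin _ _
  exact isHomogeneous_right_of_mul (isHomogeneous_X R a) (X_ne_zero a)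
    (isHomogeneous_of_sq hhomog)

end AlternatingAdjugate

section GramMatrix

variable {ι R V : Type*} [CommRing R] [AddCommGroup V] [Module R V]

/-- The Gram matrix of a family of vectors with respect to a bilinear form. -/
def gramMatrix (β : V →ₗ[R] V →ₗ[R] R) (w : ι → V) : Matrix ι ι R :=
  of fun k l => β (w k) (w l)

theorem isAltMatrix_gramMatrix {β : V →ₗ[R] V →ₗ[R] R} (hβ : β.IsAlt) (w : ι → V) :
    IsAltMatrix (gramMatrix β w) where
  transpose_eq_neg := by
    ext k l
    exact (hβ.neg (w k) (w l)).symm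
  diag_eq_zero k := hβ (w k)

theorem gramMatrix_transpose_mulVecLin [Fintype ι] (β : V →ₗ[R] V →ₗ[R] R) (w : ι → V) :
    (gramMatrix β w)ᵀ.mulVecLin = LinearMap.funLeft R R w ∘ₗ LinearMap.ltoFun R V R R ∘ₗ
      β ∘ₗ Fintype.linearCombination R w := by
  ext c k
  simp [gramMatrix, vecMul, dotProduct, Fintype.linearCombination_apply]

end GramMatrix

section AlternatingForm

variable {ι K V : Type*} [Field K] [AddCommGroup V] [Module K V] {β : V →ₗ[K] V →ₗ[K] K}

theorem eq_zero_of_forall_apply_eq_zero (hβ : β.IsAlt) {w : ι → V}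
    (hspan : Submodule.span K (Set.range w) ⊔ LinearMap.ker β = ⊤) {v : V}
    (hv : ∀ k, β v (w k) = 0) : β v = 0 := by
  have hle : Submodule.span K (Set.range w) ⊔ LinearMap.ker β ≤ LinearMap.ker (β v) := by
    refine sup_le (Submodule.span_le.mpr (Set.range_subset_iff.mpr hv)) fun u hu => ?_
    rw [LinearMap.mem_ker, ← hβ.neg, LinearMap.mem_ker.mp hu, LinearMap.zero_apply, neg_zero]
  rwa [hspan, top_le_iff, LinearMap.ker_eq_top] at hle

theorem finrank_range_eq_rank_gramMatrix [Fintype ι] (hβ : β.IsAlt)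
    {w : ι → V} (hspan : Submodule.span K (Set.range w) ⊔ LinearMap.ker β = ⊤) :
    Module.finrank K (LinearMap.range β) = (gramMatrix β w).rank := by
  let evaluation := LinearMap.funLeft K K w ∘ₗ LinearMap.ltoFun K V K K
  have hinj : Function.Injective (evaluation.domRestrict (LinearMap.range β)) := by
    refine (injective_iff_map_eq_zero _).mpr ?_
    rintro ⟨_, v, rfl⟩ hv
    exact Subtype.ext (eq_zero_of_forall_apply_eq_zero hβ hspan (congr_fun hv))
  have hrange : LinearMap.range (β ∘ₗ Fintype.linearCombination K w) = LinearMap.range β := by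
    rw [LinearMap.range_comp, Fintype.range_linearCombination, ← Submodule.map_top, ← hspan,
      Submodule.map_sup, (LinearMap.le_ker_iff_map).mp le_rfl, sup_bot_eq]
  rw [← rank_transpose, rank, gramMatrix_transpose_mulVecLin, ← LinearMap.comp_assoc,
    LinearMap.range_comp, hrange, ← LinearMap.range_domRestrict,
    LinearMap.finrank_range_of_inj hinj]

theorem det_ne_zero_of_rank_eq_card [Fintype ι] [DecidableEq ι] {A : Matrix ι ι K}
    (hA : A.rank = Fintype.card ι) : A.det ≠ 0 := by
  have hrange : LinearMap.range A.mulVecLin = ⊤ :=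
    Submodule.eq_top_of_finrank_eq (hA.trans (Module.finrank_fintype_fun_eq_card K).symm)
  have hunit : IsUnit A := mulVec_surjective_iff_isUnit.mp (LinearMap.range_eq_top.mp hrange)
  exact ((isUnit_iff_isUnit_det A).mp hunit).ne_zero

theorem even_finrank_range [FiniteDimensional K V] (hβ : β.IsAlt) :
    Even (Module.finrank K (LinearMap.range β)) := by
  obtain ⟨C, hC⟩ := (LinearMap.ker β).exists_isCompl
  let b := Module.finBasis K C
  have hspan : Submodule.span K (Set.range (C.subtype ∘ b)) ⊔ LinearMap.ker β = ⊤ := by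
    rw [Set.range_comp, Submodule.span_image, b.span_eq, Submodule.map_subtype_top,
      hC.symm.sup_eq_top]
  have hrank := finrank_range_eq_rank_gramMatrix hβ hspan
  have hcard : Module.finrank K (LinearMap.range β) = Fintype.card (Fin (Module.finrank K C)) := by
    have hrank_nullity := LinearMap.finrank_range_add_finrank_ker β
    have hcompl := Submodule.finrank_add_eq_of_isCompl hC
    rw [Fintype.card_fin]
    lia
  rw [hcard]
  exact ((isAltMatrix_gramMatrix hβ _).even_card_and_isSquare_det
    (det_ne_zero_of_rank_eq_card (hrank.symm.trans hcard))).1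

theorem det_gramMatrix_eq_zero_iff [Fintype ι] [DecidableEq ι] [FiniteDimensional K V]
    (hβ : β.IsAlt) {w : ι → V} (hspan : Submodule.span K (Set.range w) ⊔ LinearMap.ker β = ⊤)
    {d : ℕ} (hcard : Fintype.card ι = 2 * d + 2) :
    (gramMatrix β w).det = 0 ↔ Module.finrank K (LinearMap.range β) ≤ 2 * d := by
  have hrank := finrank_range_eq_rank_gramMatrix hβ hspan
  have hle := (gramMatrix β w).rank_le_card_width
  obtain ⟨r, hr⟩ := even_finrank_range hβ
  refine ⟨fun hdet => ?_, fun hle' => ?_⟩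
  · have hne : (gramMatrix β w).rank ≠ Fintype.card ι := fun h =>
      det_ne_zero_of_rank_eq_card h hdet
    lia
  · by_contra hdet
    have heq := rank_of_det_ne_zero hdet
    lia

end AlternatingForm

section GenericGramMatrix

open MvPolynomial

variable {α ι R V : Type*} [Fintype α] [CommRing R] [AddCommGroup V] [Module R V]
  {σ : V →ₗ[R] V →ₗ[R] V →ₗ[R] R} {w : α → V} {u : ι → V}

/-- The Gram matrix of the family `u` with respect to the form `σ(v, ·, ·)` at the generic point
`v = ∑ a, X a • w a` of the span of `w`: its entries are linear forms in the coordinates of `v`. -/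
noncomputable def genericGramMatrix (σ : V →ₗ[R] V →ₗ[R] V →ₗ[R] R) (w : α → V) (u : ι → V) :
    Matrix ι ι (MvPolynomial α R) :=
  of fun k l => ∑ a, X a * C (σ (w a) (u k) (u l))

theorem isAltMatrix_genericGramMatrix (hσ : ∀ v, (σ v).IsAlt) :
    IsAltMatrix (genericGramMatrix σ w u) where
  transpose_eq_neg := by
    ext1 k l
    simp only [genericGramMatrix, transpose_apply, Matrix.neg_apply, of_apply,
      ← Finset.sum_neg_distrib, ← mul_neg, ← map_neg, (hσ _).neg]
  diag_eq_zero k := by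
    simp only [genericGramMatrix, of_apply, hσ _ _, map_zero, mul_zero, Finset.sum_const_zero]

theorem isHomogeneous_genericGramMatrix (k l : ι) :
    (genericGramMatrix σ w u k l).IsHomogeneous 1 :=
  IsHomogeneous.sum _ _ _ fun a _ => (isHomogeneous_X R a).mul (isHomogeneous_C α _)

theorem map_eval_genericGramMatrix (c : α → R) :
    (genericGramMatrix σ w u).map (eval c) = gramMatrix (σ (∑ a, c a • w a)) u := by
  ext k l
  simp [genericGramMatrix, gramMatrix]

theorem eval_adjugate_genericGramMatrix [Fintype ι] [DecidableEq ι] (c : α → R) (k : ι) :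
    eval c ((genericGramMatrix σ w u).adjugate k k) =
      (gramMatrix (σ (∑ a, c a • w a)) fun l : {l // l ≠ k} => u l).det := by
  rw [adjugate_diag_eq_det_submatrix, RingHom.map_det, RingHom.mapMatrix_apply, ← submatrix_map,
    map_eval_genericGramMatrix]
  rfl

theorem sum_sum_C_mul_X_eq_zero (hσ : ∀ v, (σ v).IsAlt) (hσ' : σ.IsAlt) (z : V) :
    ∑ b, (∑ a, X a * C (σ (w a) z (w b))) * (X b : MvPolynomial α R) = 0 := by
  have hquad := ((isAltMatrix_gramMatrix (hσ z) w).map C).dotProduct_mulVec_self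
    (X : α → MvPolynomial α R)
  simp only [dotProduct, mulVec, Finset.mul_sum, map_apply, gramMatrix, of_apply] at hquad
  simp only [Finset.sum_mul]
  rw [Finset.sum_comm, ← neg_eq_zero, ← hquad]
  simp only [← Finset.sum_neg_distrib]
  refine Finset.sum_congr rfl fun a _ => Finset.sum_congr rfl fun b _ => ?_
  rw [← hσ'.neg, LinearMap.neg_apply, map_neg]
  ring

/-- The family `w` with its member `w a₀` replaced by the family `u`. -/
def replaceVector {τ : Type*} (w : α → V) (a₀ : α) (u : τ → V) : {a // a ≠ a₀} ⊕ τ → V :=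
  Sum.elim (fun a => w a) u

theorem genericGramMatrix_mulVec_eq_zero [DecidableEq α] {τ : Type*} [Fintype τ] {u : τ → V}
    (hσ : ∀ v, (σ v).IsAlt) (hσ' : σ.IsAlt) {a₀ : α} (ha₀ : ∀ a, σ (w a₀) (w a) = 0) :
    genericGramMatrix σ w (replaceVector w a₀ u) *ᵥ Sum.elim (fun a => X a) 0 = 0 := by
  have hzero : ∀ a z, σ (w a) z (w a₀) = 0 := by
    intro a z
    rw [← (hσ _).neg, ← hσ'.neg, LinearMap.neg_apply, ha₀, LinearMap.zero_apply, neg_zero,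
      neg_zero]
  ext1 k
  have hsum := sum_sum_C_mul_X_eq_zero (w := w) hσ hσ' (replaceVector w a₀ u k)
  rw [Fintype.sum_eq_add_sum_subtype_ne _ a₀] at hsum
  simpa [mulVec, dotProduct, genericGramMatrix, replaceVector, hzero] using hsum

end GenericGramMatrix

section DegeneracyHypersurface

open MvPolynomial

variable {α τ K V : Type*} [Fintype α] [Field K] [AddCommGroup V] [Module K V]
  {σ : V →ₗ[K] V →ₗ[K] V →ₗ[K] K} {w : α → V} {u : τ → V} {a₀ : α}

theorem mem_of_sum_smul_mem {S : Submodule K V} {c : α → K} (hsum : ∑ a, c a • w a ∈ S) {i : α}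
    (hi : c i ≠ 0) (hS : ∀ a ≠ i, w a ∈ S) : w i ∈ S := by
  classical
  rw [← Finset.add_sum_erase _ _ (Finset.mem_univ i)] at hsum
  have hrest : ∑ a ∈ Finset.univ.erase i, c a • w a ∈ S :=
    S.sum_mem fun a ha => S.smul_mem _ (hS a (Finset.ne_of_mem_erase ha))
  exact (S.smul_mem_iff hi).mp ((S.add_mem_iff_left hrest).mp hsum)

/-- The two vectors omitted from the family, `w a₀` and `w i`, are recovered from `∑ a, c a • w a`
and `w a₀`, which both lie in the kernel. -/
theorem span_range_sup_ker_eq_top (hσ' : σ.IsAlt) (ha₀ : ∀ a, σ (w a₀) (w a) = 0)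
    (hspan : Submodule.span K (Set.range w) ⊔ Submodule.span K (Set.range u) = ⊤)
    {c : α → K} {i : {a // a ≠ a₀}} (hi : c i ≠ 0) :
    Submodule.span K (Set.range fun k : {k : {a // a ≠ a₀} ⊕ τ // k ≠ Sum.inl i} =>
      replaceVector w a₀ u k) ⊔ LinearMap.ker (σ (∑ a, c a • w a)) = ⊤ := by
  set S := Submodule.span K (Set.range fun k : {k : {a // a ≠ a₀} ⊕ τ // k ≠ Sum.inl i} =>
    replaceVector w a₀ u k) with hS
  set v := ∑ a, c a • w a with hv
  have hmem (k : {a // a ≠ a₀} ⊕ τ) (hk : k ≠ Sum.inl i) :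
      replaceVector w a₀ u k ∈ S ⊔ LinearMap.ker (σ v) :=
    Submodule.mem_sup_left (Submodule.subset_span ⟨⟨k, hk⟩, rfl⟩)
  have hker : v ∈ LinearMap.ker (σ v) := hσ' v
  have hker₀ : w a₀ ∈ LinearMap.ker (σ v) := by
    rw [LinearMap.mem_ker, ← hσ'.neg, hv, map_sum, neg_eq_zero]
    exact Finset.sum_eq_zero fun a _ => by rw [map_smul, ha₀, smul_zero]
  have hw_ne (a : α) (ha : a ≠ i) : w a ∈ S ⊔ LinearMap.ker (σ v) := by
    rcases eq_or_ne a a₀ with rfl | ha₀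
    · exact Submodule.mem_sup_right hker₀
    · exact hmem (Sum.inl ⟨a, ha₀⟩) fun h => ha (congr_arg Subtype.val (Sum.inl.inj h))
  have hw (a : α) : w a ∈ S ⊔ LinearMap.ker (σ v) := by
    rcases eq_or_ne a i with rfl | ha
    · exact mem_of_sum_smul_mem (Submodule.mem_sup_right hker) hi hw_ne
    · exact hw_ne a ha
  rw [eq_top_iff, ← hspan]
  exact sup_le (Submodule.span_le.mpr (Set.range_subset_iff.mpr hw))
    (Submodule.span_le.mpr (Set.range_subset_iff.mpr fun t => hmem (Sum.inr t) Sum.inr_ne_inl))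

theorem exists_isHomogeneous_eval_eq_zero_iff_finrank_range_le [Fintype τ]
    [FiniteDimensional K V] (hσ : ∀ v, (σ v).IsAlt) (hσ' : σ.IsAlt) (ha₀ : ∀ a, σ (w a₀) (w a) = 0)
    (hspan : Submodule.span K (Set.range w) ⊔ Submodule.span K (Set.range u) = ⊤)
    (hα : 3 ≤ Fintype.card α) {d : ℕ} (hcard : Fintype.card α + Fintype.card τ = 2 * d + 4) :
    ∃ p : MvPolynomial α K, p.IsHomogeneous d ∧ ∀ c : α → K, (∃ a ≠ a₀, c a ≠ 0) →
      (eval c p = 0 ↔ Module.finrank K (LinearMap.range (σ (∑ a, c a • w a))) ≤ 2 * d) := by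
  classical
  have hcard_ne : Fintype.card {a // a ≠ a₀} = Fintype.card α - 1 := by
    rw [Fintype.card_subtype_compl, Fintype.card_subtype_eq]
  have hcard_sum : Fintype.card ({a // a ≠ a₀} ⊕ τ) = 2 * d + 3 := by
    rw [Fintype.card_sum]
    lia
  obtain ⟨i, j, hij⟩ := Fintype.one_lt_card_iff.mp
    (show 1 < Fintype.card {a // a ≠ a₀} by lia)
  obtain ⟨p, hp, hadj⟩ := (isAltMatrix_genericGramMatrix hσ).exists_isHomogeneous_adjugate_diag_eq
    (isHomogeneous_genericGramMatrix (w := w) (u := replaceVector w a₀ u)) hcard_sum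
    (genericGramMatrix_mulVec_eq_zero hσ hσ' ha₀) (i := Sum.inl i) (j := Sum.inl j) rfl rfl
    (Subtype.coe_injective.ne hij)
  refine ⟨p, hp, fun c ⟨a, ha, hca⟩ => ?_⟩
  let k₀ : {a // a ≠ a₀} ⊕ τ := Sum.inl ⟨a, ha⟩
  have hcard_minor : Fintype.card {k // k ≠ k₀} = 2 * d + 2 := by
    rw [Fintype.card_subtype_compl, Fintype.card_subtype_eq, hcard_sum]
    lia
  have hminor : (gramMatrix (σ (∑ a, c a • w a)) fun k : {k // k ≠ k₀} =>
      replaceVector w a₀ u k).det = (c a * eval c p) ^ 2 := by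
    rw [← eval_adjugate_genericGramMatrix, hadj, map_pow, map_mul, Sum.elim_inl, eval_X]
  rw [← det_gramMatrix_eq_zero_iff (hσ _)
    (span_range_sup_ker_eq_top hσ' ha₀ hspan (i := ⟨a, ha⟩) hca) hcard_minor, hminor,
    sq_eq_zero_iff, mul_eq_zero, or_iff_right hca]

end DegeneracyHypersurface

section Polarization

open MvPolynomial

variable {α R : Type*} [CommRing R]

theorem pderiv_comm (i j : α) (p : MvPolynomial α R) :
    pderiv i (pderiv j p) = pderiv j (pderiv i p) := by
  classical
  have hcommutator :
      ⁅pderiv i, pderiv j⁆ = (0 : Derivation R (MvPolynomial α R) (MvPolynomial α R)) :=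
    derivation_ext fun k => by
      rw [Derivation.commutator_apply]
      simp [pderiv_X, Pi.single_apply, apply_ite]
  rw [← sub_eq_zero, ← Derivation.commutator_apply, hcommutator, Derivation.zero_apply]

theorem eval_eq_constantCoeff_of_isHomogeneous_zero {p : MvPolynomial α R}
    (hp : p.IsHomogeneous 0) (c : α → R) : eval c p = constantCoeff p := by
  rw [totalDegree_eq_zero_iff_eq_C.mp ((totalDegree_zero_iff_isHomogeneous _).mpr hp), eval_C,
    constantCoeff_C]

variable [Fintype α]

theorem sum_mul_eval_pderiv {p : MvPolynomial α R} {n : ℕ} (hp : p.IsHomogeneous n) (c : α → R) :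
    ∑ i, c i * eval c (pderiv i p) = n * eval c p := by
  simpa using congr_arg (eval c) hp.sum_X_mul_pderiv

theorem sum_mul_constantCoeff_pderiv {p : MvPolynomial α R} (hp : p.IsHomogeneous 3) (c : α → R) :
    ∑ i, ∑ j, ∑ k, constantCoeff (pderiv i (pderiv j (pderiv k p))) * (c i * (c j * c k)) =
      6 * eval c p := by
  have hsecond (j k : α) : ∑ i, c i * constantCoeff (pderiv i (pderiv j (pderiv k p))) =
      eval c (pderiv j (pderiv k p)) := by
    have heuler := sum_mul_eval_pderiv (hp.pderiv (i := k)).pderiv c (p := pderiv j (pderiv k p))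
    simp only [eval_eq_constantCoeff_of_isHomogeneous_zero hp.pderiv.pderiv.pderiv] at heuler
    simpa using heuler
  have hfirst (k : α) : ∑ j, c j * eval c (pderiv j (pderiv k p)) = 2 * eval c (pderiv k p) := by
    simpa using sum_mul_eval_pderiv hp.pderiv c
  calc
    _ = ∑ k, c k * ∑ j, c j * ∑ i, c i * constantCoeff (pderiv i (pderiv j (pderiv k p))) := by
      rw [Finset.sum_comm_cycle]
      simp only [Finset.mul_sum]
      refine Finset.sum_congr rfl fun k _ => ?_
      rw [Finset.sum_comm]
      exact Finset.sum_congr rfl fun j _ => Finset.sum_congr rfl fun i _ => by ring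
    _ = 2 * ∑ k, c k * eval c (pderiv k p) := by
      simp only [hsecond, hfirst, Finset.mul_sum]
      exact Finset.sum_congr rfl fun k _ => by ring
    _ = 6 * eval c p := by
      rw [sum_mul_eval_pderiv hp]
      push_cast
      ring

variable {W : Type*} [AddCommGroup W] [Module R W] [Invertible (6 : R)]

/-- The polarization of a cubic form `p` in the coordinates `φ`: the symmetric trilinear form whose
coefficients are the third partial derivatives of `p`, which are constant, divided by `3! = 6`. -/
noncomputable def cubicPolarization (p : MvPolynomial α R) (φ : α → W →ₗ[R] R) :
    W →ₗ[R] W →ₗ[R] W →ₗ[R] R :=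
  ⅟(6 : R) • ∑ i, ∑ j, ∑ k, constantCoeff (pderiv i (pderiv j (pderiv k p))) •
    (φ i).smulRight ((φ j).smulRight (φ k))

theorem cubicPolarization_apply (p : MvPolynomial α R) (φ : α → W →ₗ[R] R) (x y z : W) :
    cubicPolarization p φ x y z = ⅟(6 : R) * ∑ i, ∑ j, ∑ k,
      constantCoeff (pderiv i (pderiv j (pderiv k p))) * (φ i x * (φ j y * φ k z)) := by
  simp [cubicPolarization]

theorem cubicPolarization_swap_left (p : MvPolynomial α R) (φ : α → W →ₗ[R] R) (x y z : W) :
    cubicPolarization p φ x y z = cubicPolarization p φ y x z := by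
  rw [cubicPolarization_apply, cubicPolarization_apply, Finset.sum_comm]
  refine congr_arg (⅟(6 : R) * ·) (Finset.sum_congr rfl fun i _ => Finset.sum_congr rfl fun j _ =>
    Finset.sum_congr rfl fun k _ => ?_)
  rw [pderiv_comm j i, mul_left_comm (φ j x)]

theorem cubicPolarization_swap_right (p : MvPolynomial α R) (φ : α → W →ₗ[R] R) (x y z : W) :
    cubicPolarization p φ x y z = cubicPolarization p φ x z y := by
  rw [cubicPolarization_apply, cubicPolarization_apply]
  refine congr_arg (⅟(6 : R) * ·) (Finset.sum_congr rfl fun i _ => ?_)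
  rw [Finset.sum_comm]
  refine Finset.sum_congr rfl fun j _ => Finset.sum_congr rfl fun k _ => ?_
  rw [pderiv_comm k j, mul_comm (φ k y)]

theorem cubicPolarization_self {p : MvPolynomial α R} (hp : p.IsHomogeneous 3)
    (φ : α → W →ₗ[R] R) (v : W) : cubicPolarization p φ v v v = eval (fun a => φ a v) p := by
  rw [cubicPolarization_apply, sum_mul_constantCoeff_pderiv hp fun a => φ a v,
    invOf_mul_cancel_left']

end Polarization

section TrilinearForm

variable {K V : Type*} [Field K] [AddCommGroup V] [Module K V]

theorem exists_basis_apply_eq {v : V} (hv : v ≠ 0) :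
    ∃ (s : Set V) (b : Module.Basis s K V) (i : s), b i = v := by
  have hindep : LinearIndepOn K id {v} := .singleton hv
  exact ⟨_, .extend hindep, ⟨v, Module.Basis.subset_extend hindep rfl⟩,
    Module.Basis.extend_apply_self ..⟩

theorem exists_ne_coord_ne_zero_of_notMem_span {ι : Type*} (b : Module.Basis ι K V) {i : ι}
    {v : V} (hv : v ∉ Submodule.span K {b i}) : ∃ j ≠ i, b.coord j v ≠ 0 := by
  by_contra! hzero
  rw [← Set.image_singleton, b.mem_span_image] at hv
  refine hv fun j hj => ?_
  by_contra hji
  exact Finsupp.mem_support_iff.mp hj (hzero j hji)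

theorem span_range_sup_span_range_eq_top_of_isCompl {ι κ : Type*} {W Q : Submodule K V}
    (hWQ : IsCompl W Q) (b : Module.Basis ι K W) (q : Module.Basis κ K Q) :
    Submodule.span K (Set.range (W.subtype ∘ b)) ⊔
      Submodule.span K (Set.range (Q.subtype ∘ q)) = ⊤ := by
  rw [Set.range_comp, Set.range_comp, Submodule.span_image, Submodule.span_image, b.span_eq,
    q.span_eq, Submodule.map_subtype_top, Submodule.map_subtype_top, hWQ.sup_eq_top]

variable [FiniteDimensional K V] {σ : V →ₗ[K] V →ₗ[K] V →ₗ[K] K} {W : Submodule K V}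

theorem exists_isHomogeneous_eval_coord_eq_zero_iff_finrank_range_le {ι : Type*}
    (b : Module.Basis ι K W) {i : ι} (hσ : ∀ v, (σ v).IsAlt) (hσ' : σ.IsAlt)
    (hvan : ∀ y ∈ W, σ (b i) y = 0) (hW : 3 ≤ Module.finrank K W) {d : ℕ}
    (hV : Module.finrank K V = 2 * d + 4) :
    ∃ p : MvPolynomial ι K, p.IsHomogeneous d ∧ ∀ v : W, v ∉ Submodule.span K {b i} →
      (MvPolynomial.eval (fun j => b.coord j v) p = 0 ↔
        Module.finrank K (LinearMap.range (σ (v : V))) ≤ 2 * d) := by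
  let := FiniteDimensional.fintypeBasisIndex b
  obtain ⟨Q, hQ⟩ := W.exists_isCompl
  let q := Module.finBasis K Q
  have hcard : Fintype.card ι + Fintype.card (Fin (Module.finrank K Q)) = 2 * d + 4 := by
    rw [← Module.finrank_eq_card_basis b, Fintype.card_fin,
      Submodule.finrank_add_eq_of_isCompl hQ, hV]
  obtain ⟨p, hp, hiff⟩ := exists_isHomogeneous_eval_eq_zero_iff_finrank_range_le hσ hσ'
    (w := W.subtype ∘ b) (a₀ := i) (fun j => hvan (b j) (b j).prop)
    (span_range_sup_span_range_eq_top_of_isCompl hQ b q) (Module.finrank_eq_card_basis b ▸ hW) hcard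
  refine ⟨p, hp, fun v hv => ?_⟩
  have hsum : ∑ j, b.coord j v • (W.subtype ∘ b) j = v := by
    simpa only [map_sum, map_smul] using! congr_arg W.subtype (b.sum_repr v)
  rw [hiff (fun j => b.coord j v) (exists_ne_coord_ne_zero_of_notMem_span b hv), hsum]

theorem stmt_7_general (h6 : (6 : K) ≠ 0) (hV : Module.finrank K V = 10)
    (halt : ∀ x y z : V, (x = y ∨ y = z ∨ x = z) → σ x y z = 0) {v₁ : V} (hv₁ : v₁ ≠ 0)
    (hW : 3 ≤ Module.finrank K W) (hv₁W : v₁ ∈ W) (hvan : ∀ y ∈ W, ∀ z : V, σ v₁ y z = 0) :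
    ∃ T : W →ₗ[K] W →ₗ[K] W →ₗ[K] K,
      (∀ x y z : W, T x y z = T y x z ∧ T x y z = T x z y) ∧
      ∀ v : W, (v : V) ∉ Submodule.span K {v₁} →
        (T v v v = 0 ↔ Module.finrank K (LinearMap.range (σ (v : V))) ≤ 6) := by
  lift v₁ to W using hv₁W
  obtain ⟨s, b, i, rfl⟩ := exists_basis_apply_eq (K := K) (Subtype.coe_ne_coe.mp hv₁)
  let := FiniteDimensional.fintypeBasisIndex b
  let := invertibleOfNonzero h6
  obtain ⟨p, hp, hiff⟩ := exists_isHomogeneous_eval_coord_eq_zero_iff_finrank_range_le b (i := i)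
    (d := 3) (fun x y => halt x y y (.inr (.inl rfl)))
    (fun x => LinearMap.ext fun y => halt x x y (.inl rfl))
    (fun y hy => LinearMap.ext (hvan y hy)) hW hV
  refine ⟨cubicPolarization p b.coord, fun x y z => ⟨cubicPolarization_swap_left p b.coord x y z,
    cubicPolarization_swap_right p b.coord x y z⟩, fun v hv => ?_⟩
  rw [cubicPolarization_self hp]
  refine hiff v fun hspan => hv ?_
  simpa [Submodule.mem_span_singleton, Subtype.ext_iff] using hspan

end TrilinearForm

/-- Lemma 3.4: if `σ(v₁, V₆, V₁₀) = 0`, then the locus of `v ∈ V₆` (away from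
the line `ℂv₁`) where `σ(v, ·, ·)` has rank at most 6 is cut out by a single
homogeneous cubic, i.e. there is a symmetric trilinear form `T` on `V₆` with
`T(v,v,v) = 0 ↔ rank σ(v,·,·) ≤ 6` for all `v ∈ V₆` outside `ℂv₁`. -/
theorem stmt_7 (V : Type*) [AddCommGroup V] [Module ℂ V] [FiniteDimensional ℂ V]
    (hV : Module.finrank ℂ V = 10)
    (σ : V →ₗ[ℂ] V →ₗ[ℂ] V →ₗ[ℂ] ℂ)
    (halt : ∀ x y z : V, (x = y ∨ y = z ∨ x = z) → σ x y z = 0)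
    (v₁ : V) (hv₁ : v₁ ≠ 0)
    (V₆ : Submodule ℂ V) (hV₆ : Module.finrank ℂ V₆ = 6) (hv₁6 : v₁ ∈ V₆)
    (hvan : ∀ y ∈ V₆, ∀ z : V, σ v₁ y z = 0) :
    ∃ T : V₆ →ₗ[ℂ] V₆ →ₗ[ℂ] V₆ →ₗ[ℂ] ℂ,
      (∀ x y z : V₆, T x y z = T y x z ∧ T x y z = T x z y) ∧
      ∀ v : V₆, (v : V) ∉ Submodule.span ℂ {v₁} →
        (T v v v = 0 ↔ Module.finrank ℂ (LinearMap.range (σ (v : V))) ≤ 6) :=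
  stmt_7_general (by norm_num) hV halt hv₁ (by lia) hv₁6 hvan
end

section
/- Let V₁₀ be a 10-dimensional complex vector space, σ an alternating trilinear form on V₁₀, v₁ a nonzero vector, and V₆ ⊆ V₁₀ a 6-dimensional subspace with σ(v₁, y, z) = 0 for all y ∈ V₆, z ∈ V₁₀, and such that {z ∈ V₁₀ : σ(v₁, y, z) = 0 for all y ∈ V₁₀} = V₆. Let U₇ be a 7-dimensional subspace with V₆ ⊆ U₇ ⊆ V₁₀, set U₇^⊥ := {w ∈ V₁₀ : σ(v₁, u, w) = 0 for all u ∈ U₇}, and let l₀ ∈ U₇ \ V₆. Then the rank of the alternating bilinear form σ(l₀, ·, ·) on V₁₀ is at most 6 if and only if the rank of the restriction of σ(l₀, ·, ·) to the subspace U₇^⊥ is at most 4. -/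
/-!
Write `ω = σ l₀`. Since `U₇` is spanned by `l₀` and the kernel of `σ v₁`, the subspace `U₇^⊥` is the
hyperplane `ker (ω v₁)`, and `ω v₁ ≠ 0` because `l₀` is not in that kernel. Restricting the left
argument of `ω` to this hyperplane lowers the rank by one: evaluation at `v₁` is a nonzero
functional on the range of `ω`, and its pullback along `ω` is `-ω v₁`. Restricting the right
argument kills exactly the line spanned by `ω v₁`, which is still in the range since `v₁` itself
lies in the hyperplane, so the rank drops by one again.
-/

open Module

section DivisionRing

universe u v w x

variable {K : Type u} {V : Type v} {W : Type w} {W' : Type x} [DivisionRing K]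
  [AddCommGroup V] [Module K V] [AddCommGroup W] [Module K W] [AddCommGroup W'] [Module K W']

lemma lift_rank_comp_add_rank_range_inf_ker (f : V →ₗ[K] W) (g : W →ₗ[K] W') :
    Cardinal.lift.{w} (LinearMap.rank (g ∘ₗ f)) +
        Cardinal.lift.{x} (Module.rank K ↥(LinearMap.range f ⊓ LinearMap.ker g)) =
      Cardinal.lift.{x} (LinearMap.rank f) := by
  have rank_ker : Module.rank K (LinearMap.ker (g.domRestrict (LinearMap.range f))) =
      Module.rank K ↥(LinearMap.range f ⊓ LinearMap.ker g) := by
    rw [LinearMap.ker_domRestrict, ← Submodule.map_comap_subtype]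
    exact (Submodule.equivMapOfInjective _ (Submodule.subtype_injective _) _).rank_eq
  rw [LinearMap.rank, LinearMap.range_comp, ← LinearMap.range_domRestrict, ← rank_ker]
  exact LinearMap.lift_rank_range_add_rank_ker _

lemma rank_eq_rank_domRestrict_ker_comp_add_one (f : V →ₗ[K] W) {φ : W →ₗ[K] K}
    (hφ : φ ∘ₗ f ≠ 0) :
    LinearMap.rank f = LinearMap.rank (f.domRestrict (LinearMap.ker (φ ∘ₗ f))) + 1 := by
  have rank_comp : LinearMap.rank (φ ∘ₗ f) = 1 := by
    rw [LinearMap.rank, LinearMap.range_eq_top.mpr (LinearMap.surjective_of_ne_zero hφ),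
      rank_top, rank_self]
  have range_eq : LinearMap.range (f.domRestrict (LinearMap.ker (φ ∘ₗ f))) =
      LinearMap.range f ⊓ LinearMap.ker φ := by
    rw [LinearMap.range_domRestrict, LinearMap.ker_comp, Submodule.map_comap_eq]
  have h := lift_rank_comp_add_rank_range_inf_ker f φ
  rw [rank_comp, ← range_eq] at h
  apply Cardinal.lift_injective.{u}
  simpa only [Cardinal.lift_add, Cardinal.lift_one, add_comm] using h.symm

lemma covBy_of_le_of_finrank_eq_add_one {S T : Submodule K V} [FiniteDimensional K T] (hST : S ≤ T)
    (h : finrank K T = finrank K S + 1) : S ⋖ T := by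
  refine ⟨lt_of_le_of_ne hST (by rintro rfl; lia), fun X hSX hXT ↦ ?_⟩
  have : FiniteDimensional K X := Submodule.finiteDimensional_of_le hXT.le
  have hSX := Submodule.finrank_lt_finrank_of_lt hSX
  have hXT := Submodule.finrank_lt_finrank_of_lt hXT
  lia

lemma sup_span_singleton_eq_of_covBy {S T : Submodule K V} (hST : S ⋖ T) {y : V} (hyT : y ∈ T)
    (hyS : y ∉ S) : S ⊔ K ∙ y = T :=
  (hST.eq_or_eq le_sup_left (sup_le hST.le (by simpa))).resolve_left
    (left_lt_sup.mpr (by simpa)).ne'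

end DivisionRing

section Field

variable {K V : Type*} [Field K] [AddCommGroup V] [Module K V]

lemma dualAnnihilator_ker_eq_span_singleton (φ : Dual K V) :
    (LinearMap.ker φ).dualAnnihilator = K ∙ φ := by
  have ker_eq : LinearMap.ker φ = (K ∙ φ).dualCoannihilator := by
    ext y
    simp [← SetLike.mem_coe (p := Submodule.dualCoannihilator _),
      Submodule.coe_dualCoannihilator_span]
  rw [ker_eq, Subspace.dualCoannihilator_dualAnnihilator_eq]

lemma rank_eq_rank_dualRestrict_ker_comp_add_one {M : Type*} [AddCommGroup M] [Module K M]
    (f : M →ₗ[K] Dual K V) {φ : Dual K V} (hφ : φ ≠ 0) (hφf : φ ∈ LinearMap.range f) :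
    LinearMap.rank f = LinearMap.rank ((LinearMap.ker φ).dualRestrict ∘ₗ f) + 1 := by
  have rank_inf_ker : Module.rank K
      ↥(LinearMap.range f ⊓ LinearMap.ker (LinearMap.ker φ).dualRestrict) = 1 := by
    rw [Submodule.dualRestrict_ker_eq_dualAnnihilator, dualAnnihilator_ker_eq_span_singleton,
      inf_eq_right.mpr ((Submodule.span_singleton_le_iff_mem _ _).mpr hφf),
      ← finrank_eq_rank, finrank_span_singleton hφ, Nat.cast_one]
  have h := lift_rank_comp_add_rank_range_inf_ker f (LinearMap.ker φ).dualRestrict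
  simpa only [rank_inf_ker, Cardinal.lift_id, Cardinal.lift_one] using h.symm

lemma rank_eq_rank_restrict_ker_add_two_of_isAlt {B : LinearMap.BilinForm K V} (hB : B.IsAlt)
    {v : V} (hv : B v ≠ 0) :
    LinearMap.rank B = LinearMap.rank (B.restrict (LinearMap.ker (B v))) + 2 := by
  have eval_comp : Dual.eval K V v ∘ₗ B = -B v := by
    ext y
    exact (hB.neg_eq v y).symm
  have rank_left : LinearMap.rank B = LinearMap.rank (B.domRestrict (LinearMap.ker (B v))) + 1 := by
    have h := rank_eq_rank_domRestrict_ker_comp_add_one B (φ := Dual.eval K V v)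
      (by rwa [eval_comp, neg_ne_zero])
    rwa [eval_comp, LinearMap.ker_neg] at h
  have rank_right : LinearMap.rank (B.domRestrict (LinearMap.ker (B v))) =
      LinearMap.rank (B.restrict (LinearMap.ker (B v))) + 1 :=
    rank_eq_rank_dualRestrict_ker_comp_add_one _ hv ⟨⟨v, hB v⟩, rfl⟩
  rw [rank_left, rank_right, add_assoc, one_add_one_eq_two]

lemma orthogonal_eq_ker_of_ker_covBy (B : LinearMap.BilinForm K V) {U : Submodule K V}
    (hU : LinearMap.ker B ⋖ U) {l : V} (hlU : l ∈ U) (hl : B l ≠ 0) :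
    B.orthogonal U = LinearMap.ker (B l) := by
  have sup_eq : LinearMap.ker B ⊔ K ∙ l = U := sup_span_singleton_eq_of_covBy hU hlU hl
  refine le_antisymm (fun w hw ↦ hw l hlU) fun w hw u hu ↦ ?_
  obtain ⟨a, ha, b, hb, rfl⟩ := Submodule.mem_sup.mp (sup_eq ▸ hu)
  obtain ⟨c, rfl⟩ := Submodule.mem_span_singleton.mp hb
  simp [LinearMap.mem_ker.mp ha, LinearMap.mem_ker.mp hw]

theorem stmt_9_general (σ : V →ₗ[K] V →ₗ[K] V →ₗ[K] K)
    (halt : ∀ x y z : V, (x = y ∨ y = z ∨ x = z) → σ x y z = 0) (v : V)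
    (W : Submodule K V) (hker : ∀ z : V, (∀ y : V, σ v y z = 0) ↔ z ∈ W)
    (U : Submodule K V) (hWU : W ⋖ U)
    (P : Submodule K V) (hP : ∀ w : V, w ∈ P ↔ ∀ u ∈ U, σ v u w = 0)
    (l : V) (hlU : l ∈ U) (hlW : l ∉ W) :
    LinearMap.rank (σ l) = LinearMap.rank ((σ l).compl₁₂ P.subtype P.subtype) + 2 := by
  have alt_left : σ.IsAlt := fun x ↦ LinearMap.ext fun z ↦ halt x x z (.inl rfl)
  have alt_right (x : V) : (σ x).IsAlt := fun y ↦ halt x y y (.inr (.inl rfl))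
  have ker_eq : LinearMap.ker (σ v) = W := by
    ext z
    simp only [← hker, LinearMap.mem_ker, LinearMap.ext_iff, LinearMap.zero_apply,
      (alt_right v).eq_iff (x := z)]
  have hl : σ v l ≠ 0 := by rwa [ne_eq, ← LinearMap.mem_ker, ker_eq]
  have perp_eq : P = LinearMap.ker (σ l v) := by
    rw [← alt_left.neg v l, LinearMap.ker_neg,
      ← orthogonal_eq_ker_of_ker_covBy (σ v) (ker_eq ▸ hWU) hlU hl]
    exact Submodule.ext hP
  subst perp_eq
  exact rank_eq_rank_restrict_ker_add_two_of_isAlt (alt_right l)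
    (by rwa [← alt_left.neg v l, neg_ne_zero])

end Field

/-- Lemma 3.8: with `σ(v₁, V₆, V₁₀) = 0`, kernel of `σ(v₁,·,·)` equal to `V₆`,
a 7-dimensional `U₇` with `V₆ ⊆ U₇`, `P = U₇^⊥` the perpendicular of `U₇` with
respect to `σ(v₁,·,·)`, and `l₀ ∈ U₇ \ V₆`: the form `σ(l₀,·,·)` has rank at
most 6 on `V₁₀` if and only if its restriction to `P` has rank at most 4. -/
theorem stmt_9 (V : Type*) [AddCommGroup V] [Module ℂ V] [FiniteDimensional ℂ V]
    (hV : Module.finrank ℂ V = 10)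
    (σ : V →ₗ[ℂ] V →ₗ[ℂ] V →ₗ[ℂ] ℂ)
    (halt : ∀ x y z : V, (x = y ∨ y = z ∨ x = z) → σ x y z = 0)
    (v₁ : V) (hv₁ : v₁ ≠ 0)
    (V₆ : Submodule ℂ V) (hV₆ : Module.finrank ℂ V₆ = 6) (hv₁6 : v₁ ∈ V₆)
    (hvan : ∀ y ∈ V₆, ∀ z : V, σ v₁ y z = 0)
    (hker : ∀ z : V, (∀ y : V, σ v₁ y z = 0) ↔ z ∈ V₆)
    (U₇ : Submodule ℂ V) (hU₇ : Module.finrank ℂ U₇ = 7) (h67 : V₆ ≤ U₇)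
    (P : Submodule ℂ V) (hP : ∀ w : V, w ∈ P ↔ ∀ u ∈ U₇, σ v₁ u w = 0)
    (l₀ : V) (hl₀ : l₀ ∈ U₇) (hl₀' : l₀ ∉ V₆) :
    Module.finrank ℂ (LinearMap.range (σ l₀)) ≤ 6 ↔
      Module.finrank ℂ (LinearMap.range ((σ l₀).compl₁₂ P.subtype P.subtype)) ≤ 4 := by
  have h67_covBy : V₆ ⋖ U₇ := covBy_of_le_of_finrank_eq_add_one h67 (by rw [hU₇, hV₆])
  have h := stmt_9_general σ halt v₁ V₆ hker U₇ h67_covBy P hP l₀ hl₀ hl₀'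
  simp only [LinearMap.rank, ← finrank_eq_rank] at h
  norm_cast at h
  lia
end

section
/- Let V₁₀ be a 10-dimensional complex vector space, σ an alternating trilinear form on V₁₀, v₁ a nonzero vector, and V₆ ⊆ V₁₀ a 6-dimensional subspace with σ(v₁, y, z) = 0 for all y ∈ V₆, z ∈ V₁₀, and such that {z ∈ V₁₀ : σ(v₁, y, z) = 0 for all y ∈ V₁₀} = V₆. Assume in addition that every w ∈ V₁₀ for which the alternating bilinear form σ(w, ·, ·) has rank at most 4 lies in ℂv₁. Let U₇ be a 7-dimensional subspace with V₆ ⊆ U₇ ⊆ V₁₀, set U₇^⊥ := {w ∈ V₁₀ : σ(v₁, u, w) = 0 for all u ∈ U₇}, and let l₀ ∈ U₇ \ V₆ be such that σ(l₀, ·, ·) has rank at most 6. Then the restriction of σ(l₀, ·, ·) to U₇^⊥ has rank exactly 4. -/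
/-!
Since `V₆ = ker σ(v₁, ·, ·)` and `U₇ = V₆ ⊕ ℂl₀`, the space `U₇^⊥` is the orthogonal of `v₁` for the
alternating form `B = σ(l₀, ·, ·)`. For a reflexive form `B` and a totally isotropic subspace `W`,
restricting `B` to `W^⊥` lowers the rank by twice the dimension of the image of `W` in the dual
space, because the radical of the restriction is `W^⊥⊥ ⊆ W^⊥`. For `W = ℂv₁` the rank drops by
exactly two. The rank of an alternating form is even, and `rank B > 4` because `l₀ ∉ ℂv₁`, so
`rank B = 6`.
-/

open LinearMap (BilinForm ker range finrank_range_add_finrank_ker)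
open LinearMap.BilinForm
open Module (finrank)
open Submodule (span)

section BilinForm

section Semiring

variable {R M : Type*} [CommSemiring R] [AddCommMonoid M] [Module R M] {B : BilinForm R M}

theorem map_subtype_ker_restrict (hB : B.IsRefl) (W : Submodule R M) :
    (ker (B.restrict W)).map W.subtype = W ⊓ B.orthogonal W := by
  refine le_antisymm ?_ (inf_orthogonal_self_le_ker_restrict hB)
  rintro _ ⟨x, hx, rfl⟩
  exact ⟨x.2, fun y hy ↦ hB _ _ (LinearMap.congr_fun hx ⟨y, hy⟩)⟩

theorem orthogonal_ker_sup (W : Submodule R M) :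
    B.orthogonal (ker B ⊔ W) = B.orthogonal W := by
  refine le_antisymm (orthogonal_le le_sup_right) fun x hx y hy ↦ ?_
  obtain ⟨k, hk, w, hw, rfl⟩ := Submodule.mem_sup.1 hy
  rw [map_add, LinearMap.mem_ker.1 hk, zero_add, hx w hw]

end Semiring

variable {K V : Type*} [Field K] [AddCommGroup V] [Module K V] [FiniteDimensional K V]
  {B : BilinForm K V}

theorem finrank_range_restrict_add_finrank_inf_orthogonal (hB : B.IsRefl) (W : Submodule K V) :
    finrank K (range (B.restrict W)) + finrank K ↥(W ⊓ B.orthogonal W) = finrank K W := by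
  rw [← map_subtype_ker_restrict hB, Submodule.finrank_map_subtype_eq,
    finrank_range_add_finrank_ker]

theorem finrank_map_add_finrank_orthogonal (B : BilinForm K V) (W : Submodule K V) :
    finrank K (W.map B) + finrank K (B.orthogonal W) = finrank K V := by
  have rank_nullity := finrank_range_add_finrank_ker (B.domRestrict W)
  rw [LinearMap.range_domRestrict, ← Submodule.finrank_map_subtype_eq,
    toLin_restrict_ker_eq_inf_ker] at rank_nullity
  have dim_orthogonal := finrank_add_finrank_orthogonal' (B := B) W
  omega

theorem finrank_range_restrict_orthogonal_add_two_mul (hB : B.IsRefl) {W : Submodule K V}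
    (hW : W ≤ B.orthogonal W) :
    finrank K (range (B.restrict (B.orthogonal W))) + 2 * finrank K (W.map B) =
      finrank K (range B) := by
  have radical_eq : B.orthogonal W ⊓ B.orthogonal (B.orthogonal W) =
      B.orthogonal (B.orthogonal W) := inf_eq_right.2 (orthogonal_le hW)
  have ker_le : ker B ≤ B.orthogonal W := by
    rw [← orthogonal_top_eq_ker hB]
    exact orthogonal_le le_top
  have rank_restrict := finrank_range_restrict_add_finrank_inf_orthogonal hB (B.orthogonal W)
  have dim_orthogonal := finrank_map_add_finrank_orthogonal B W
  have dim_double_orthogonal := finrank_add_finrank_orthogonal' (B := B) (B.orthogonal W)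
  have rank_nullity := finrank_range_add_finrank_ker B
  rw [radical_eq] at rank_restrict
  rw [inf_eq_right.2 ker_le] at dim_double_orthogonal
  omega

theorem finrank_range_restrict_orthogonal_span_singleton_add_two (hB : B.IsAlt) {v : V}
    (hv : B v ≠ 0) :
    finrank K (range (B.restrict (B.orthogonal (span K {v})))) + 2 = finrank K (range B) := by
  have isotropic : span K {v} ≤ B.orthogonal (span K {v}) := by
    simpa [Submodule.span_singleton_le_iff_mem, Submodule.mem_span_singleton] using
      fun a ↦ Or.inr (hB v)
  have h := finrank_range_restrict_orthogonal_add_two_mul hB.isRefl isotropic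
  rwa [Submodule.map_span, Set.image_singleton, finrank_span_singleton hv] at h

theorem even_finrank_range_of_isAlt (hB : B.IsAlt) : Even (finrank K (range B)) := by
  induction hn : finrank K (range B) using Nat.strong_induction_on generalizing V with
  | _ n ih =>
    obtain rfl | hB₀ := eq_or_ne B 0
    · rw [← hn, LinearMap.range_zero, finrank_bot]
      exact Even.zero
    · obtain ⟨v, hv⟩ := DFunLike.ne_iff.1 hB₀
      have rank_drop := finrank_range_restrict_orthogonal_span_singleton_add_two hB hv
      have isAlt_restrict : (B.restrict (B.orthogonal (span K {v}))).IsAlt := fun x ↦ hB x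
      rw [← hn, ← rank_drop]
      exact (ih _ (by omega) isAlt_restrict rfl).add even_two

end BilinForm

section TrilinearForm

theorem orthogonal_ker_sup_span_singleton {R M : Type*} [CommRing R] [AddCommGroup M] [Module R M]
    {σ : M →ₗ[R] M →ₗ[R] M →ₗ[R] R} (h₁₂ : σ.IsAlt) (v l : M) :
    orthogonal (σ v) (ker (σ v) ⊔ span R {l}) = orthogonal (σ l) (span R {v}) := by
  rw [orthogonal_ker_sup]
  ext w
  simp [Submodule.mem_span_singleton, ← h₁₂.neg l v]

variable {K V : Type*} [Field K] [AddCommGroup V] [Module K V] [FiniteDimensional K V]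
  {σ : V →ₗ[K] V →ₗ[K] V →ₗ[K] K}

theorem finrank_range_restrict_orthogonal_ker_sup_add_two (h₁₂ : σ.IsAlt)
    (h₂₃ : ∀ x, (σ x).IsAlt) {v l : V} (hl : l ∉ ker (σ v)) :
    finrank K (range (BilinForm.restrict (σ l)
      (orthogonal (σ v) (ker (σ v) ⊔ span K {l})))) + 2 = finrank K (range (σ l)) := by
  have hlv : σ l v ≠ 0 := by rwa [← h₁₂.neg, neg_ne_zero]
  rw [orthogonal_ker_sup_span_singleton h₁₂]
  exact finrank_range_restrict_orthogonal_span_singleton_add_two (h₂₃ l) hlv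

theorem stmt_10_general (h₁₂ : σ.IsAlt) (h₂₃ : ∀ x, (σ x).IsAlt) {r : ℕ} (hr : Even r) {v : V}
    (hrank : ∀ w, finrank K (range (σ w)) ≤ r → w ∈ span K {v})
    {U : Submodule K V} (hU : finrank K U = finrank K (ker (σ v)) + 1) (hker : ker (σ v) ≤ U)
    {l : V} (hlU : l ∈ U) (hl : l ∉ ker (σ v)) (hlr : finrank K (range (σ l)) ≤ r + 2) :
    finrank K (range (BilinForm.restrict (σ l) (orthogonal (σ v) U))) = r := by
  have U_eq : ker (σ v) ⊔ span K {l} = U :=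
    Submodule.eq_of_le_of_finrank_eq
      (sup_le hker ((Submodule.span_singleton_le_iff_mem _ _).2 hlU))
      ((Submodule.finrank_sup_span_singleton hl).trans hU.symm)
  have lt_rank : r < finrank K (range (σ l)) := by
    by_contra! h
    exact hl ((Submodule.span_singleton_le_iff_mem _ _).2 (h₁₂ v) (hrank l h))
  have rank_drop := finrank_range_restrict_orthogonal_ker_sup_add_two h₁₂ h₂₃ hl
  obtain ⟨m, hm⟩ := even_finrank_range_of_isAlt (h₂₃ l)
  obtain ⟨k, hk⟩ := hr
  rw [U_eq] at rank_drop
  omega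

end TrilinearForm

/-- End of the proof of Lemma 3.8: in the setting of Lemma 3.8, assuming
moreover that `ℂv₁` is the only line where `σ(w,·,·)` has rank at most 4, if
`l₀ ∈ U₇ \ V₆` satisfies `rank σ(l₀,·,·) ≤ 6`, then the restriction of
`σ(l₀,·,·)` to `U₇^⊥` has rank exactly 4. -/
theorem stmt_10 (V : Type*) [AddCommGroup V] [Module ℂ V] [FiniteDimensional ℂ V]
    (hV : Module.finrank ℂ V = 10)
    (σ : V →ₗ[ℂ] V →ₗ[ℂ] V →ₗ[ℂ] ℂ)
    (halt : ∀ x y z : V, (x = y ∨ y = z ∨ x = z) → σ x y z = 0)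
    (v₁ : V) (hv₁ : v₁ ≠ 0)
    (V₆ : Submodule ℂ V) (hV₆ : Module.finrank ℂ V₆ = 6) (hv₁6 : v₁ ∈ V₆)
    (hvan : ∀ y ∈ V₆, ∀ z : V, σ v₁ y z = 0)
    (hker : ∀ z : V, (∀ y : V, σ v₁ y z = 0) ↔ z ∈ V₆)
    (hrk4 : ∀ w : V, Module.finrank ℂ (LinearMap.range (σ w)) ≤ 4 →
      w ∈ Submodule.span ℂ {v₁})
    (U₇ : Submodule ℂ V) (hU₇ : Module.finrank ℂ U₇ = 7) (h67 : V₆ ≤ U₇)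
    (P : Submodule ℂ V) (hP : ∀ w : V, w ∈ P ↔ ∀ u ∈ U₇, σ v₁ u w = 0)
    (l₀ : V) (hl₀ : l₀ ∈ U₇) (hl₀' : l₀ ∉ V₆)
    (hl₀6 : Module.finrank ℂ (LinearMap.range (σ l₀)) ≤ 6) :
    Module.finrank ℂ (LinearMap.range ((σ l₀).compl₁₂ P.subtype P.subtype)) = 4 := by
  have h₁₂ : σ.IsAlt := fun x ↦ LinearMap.ext fun z ↦ halt x x z (.inl rfl)
  have h₂₃ (x : V) : (σ x).IsAlt := fun y ↦ halt x y y (.inr (.inl rfl))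
  obtain rfl : V₆ = ker (σ v₁) := by
    rw [← orthogonal_top_eq_ker (h₂₃ v₁).isRefl]
    ext z
    simp [← hker]
  obtain rfl : P = orthogonal (σ v₁) U₇ := Submodule.ext hP
  exact stmt_10_general h₁₂ h₂₃ (by decide) hrk4 (by rw [hU₇, hV₆]) h67 hl₀ hl₀' hl₀6
end

section
/- Let A be a 7-dimensional complex vector space and A₂ ⊆ A a 2-dimensional subspace, and let q : Λ²A → Λ²(A/A₂) be the map induced by the quotient A → A/A₂. Let b ∈ Λ²A be such that: (i) b = e₁ ∧ e₂ + e₃ ∧ e₄ for some linearly independent vectors e₁, e₂, e₃, e₄ ∈ A (i.e. b has rank four), and (ii) q(b) = w₁ ∧ w₂ for some linearly independent w₁, w₂ ∈ A/A₂ (i.e. b has rank two modulo A₂). Then there exist a, a′ ∈ A₂, vectors x, u, v ∈ A, and y ∈ A₂ + span{u, v} such that b = a ∧ x + a′ ∧ y + u ∧ v. -/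
open ExteriorAlgebra

/-!
Let `b = ∑ xᵢ ∧ yᵢ` have `n + 1` terms, and suppose that modulo a subspace `S` it equals a sum of
only `n` terms `zⱼ ∧ wⱼ`. Contracting `b` modulo `S` with linear functionals gives only vectors in
the span of the `2 n` factors `zⱼ, wⱼ`; if the classes of the `2 n + 2` vectors `xᵢ, yᵢ` were
independent, each of them would arise from such a contraction, which is impossible. Hence `S`
contains some `a = ∑ (cᵢ xᵢ + dᵢ yᵢ)` with, say, `cₖ` or `dₖ` nonzero. Choose `z` with
`(cₖ xₖ + dₖ yₖ) ∧ z = xₖ ∧ yₖ`. Replacing every pair `(xᵢ, yᵢ)` by `(xᵢ + dᵢ z, yᵢ - cᵢ z)`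
subtracts `a ∧ z` from `b` and kills the `k`-th term, so `b - a ∧ z` is a sum of `n` terms. For
`n = 1` this is the required normal form, with middle term zero.
-/

section Contraction

variable {R M σ : Type*} [CommRing R] [AddCommGroup M] [Module R M] [Fintype σ]

theorem contractLeft_sum_ι_mul_ι (d : Module.Dual R M) (x y : σ → M) :
    CliffordAlgebra.contractLeft d (∑ i, ι R (x i) * ι R (y i)) =
      ι R (∑ i, (d (x i) • y i - d (y i) • x i)) := by
  simp only [map_sum, CliffordAlgebra.contractLeft_ι_mul, CliffordAlgebra.contractLeft_ι,
    map_sub, map_smul, ← Algebra.commutes, ← Algebra.smul_def]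

theorem contraction_mem_span_of_sum_ι_mul_ι_eq {τ : Type*} [Fintype τ] {x y : σ → M} {z w : τ → M}
    (h : ∑ i, ι R (x i) * ι R (y i) = ∑ j, ι R (z j) * ι R (w j)) (d : Module.Dual R M) :
    ∑ i, (d (x i) • y i - d (y i) • x i) ∈ Submodule.span R (Set.range (Sum.elim z w)) := by
  have contraction_eq : ∑ i, (d (x i) • y i - d (y i) • x i) =
      ∑ j, (d (z j) • w j - d (w j) • z j) := by
    rw [← ι_inj R, ← contractLeft_sum_ι_mul_ι, h, contractLeft_sum_ι_mul_ι]
  rw [contraction_eq]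
  exact Submodule.sum_mem _ fun j _ => Submodule.sub_mem _
    (Submodule.smul_mem _ _ (Submodule.subset_span ⟨.inr j, rfl⟩))
    (Submodule.smul_mem _ _ (Submodule.subset_span ⟨.inl j, rfl⟩))

end Contraction

section Rank

variable {K V : Type*} [Field K] [AddCommGroup V] [Module K V]

theorem exists_dual_apply_eq_of_linearIndependent {σ : Type*} {v : σ → V}
    (hv : LinearIndependent K v) (c : σ → K) : ∃ d : Module.Dual K V, ∀ i, d (v i) = c i := by
  obtain ⟨d, hd⟩ := LinearMap.exists_extend ((Module.Basis.span hv).constr K c)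
  refine ⟨d, fun i => ?_⟩
  have h := LinearMap.congr_fun hd (Module.Basis.span hv i)
  rwa [Module.Basis.constr_basis, LinearMap.comp_apply, Submodule.subtype_apply,
    Module.Basis.span_apply] at h

variable {σ τ : Type*} [Fintype σ] [Fintype τ] {x y : σ → V} {z w : τ → V}

theorem range_subset_span_of_sum_ι_mul_ι_eq (hxy : LinearIndependent K (Sum.elim x y))
    (h : ∑ i, ι K (x i) * ι K (y i) = ∑ j, ι K (z j) * ι K (w j)) :
    Set.range (Sum.elim x y) ⊆ Submodule.span K (Set.range (Sum.elim z w)) := by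
  classical
  rintro _ ⟨k, rfl⟩
  -- The functional dual to `x k` contracts the bivector to `y k`, the one dual to `y k` to `-x k`.
  obtain ⟨d, hd⟩ := exists_dual_apply_eq_of_linearIndependent hxy (Pi.single k.swap 1)
  have hx (i : σ) : d (x i) = Pi.single (M := fun _ => K) k.swap 1 (.inl i) := hd (.inl i)
  have hy (i : σ) : d (y i) = Pi.single (M := fun _ => K) k.swap 1 (.inr i) := hd (.inr i)
  have contraction_mem := contraction_mem_span_of_sum_ι_mul_ι_eq h d
  cases k with
  | inl k => simpa [hx, hy, Pi.single_apply, ite_smul] using contraction_mem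
  | inr k => simpa [hx, hy, Pi.single_apply, ite_smul] using contraction_mem

theorem card_le_card_of_sum_ι_mul_ι_eq (hxy : LinearIndependent K (Sum.elim x y))
    (h : ∑ i, ι K (x i) * ι K (y i) = ∑ j, ι K (z j) * ι K (w j)) :
    Fintype.card σ ≤ Fintype.card τ := by
  have := Module.Finite.span_of_finite K (Set.finite_range (Sum.elim z w))
  have card_le : Fintype.card (σ ⊕ σ) ≤ Fintype.card (τ ⊕ τ) := calc
    Fintype.card (σ ⊕ σ)
    _ = Module.finrank K (Submodule.span K (Set.range (Sum.elim x y))) :=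
        (finrank_span_eq_card hxy).symm
    _ ≤ Module.finrank K (Submodule.span K (Set.range (Sum.elim z w))) :=
        Submodule.finrank_mono (Submodule.span_le.mpr (range_subset_span_of_sum_ι_mul_ι_eq hxy h))
    _ ≤ Fintype.card (τ ⊕ τ) := finrank_range_le_card _
  simp only [Fintype.card_sum] at card_le
  lia

theorem exists_sum_smul_add_smul_eq_zero (hcard : Fintype.card τ < Fintype.card σ)
    (h : ∑ i, ι K (x i) * ι K (y i) = ∑ j, ι K (z j) * ι K (w j)) :
    ∃ c d : σ → K, (∃ k, c k ≠ 0 ∨ d k ≠ 0) ∧ ∑ i, (c i • x i + d i • y i) = 0 := by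
  have hdep : ¬ LinearIndependent K (Sum.elim x y) := fun hxy =>
    hcard.not_ge (card_le_card_of_sum_ι_mul_ι_eq hxy h)
  obtain ⟨f, hf, k, hk⟩ := Fintype.not_linearIndependent_iff.mp hdep
  refine ⟨f ∘ .inl, f ∘ .inr, ?_, ?_⟩
  · cases k with
    | inl k => exact ⟨k, .inl hk⟩
    | inr k => exact ⟨k, .inr hk⟩
  · simpa [Fintype.sum_sum_type, Finset.sum_add_distrib] using hf

end Rank

section NormalForm

variable {R M : Type*} [CommRing R] [AddCommGroup M] [Module R M]

theorem ι_mul_ι_eq_neg_swap (x y : M) : ι R x * ι R y = -(ι R y * ι R x) :=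
  eq_neg_of_add_eq_zero_left (ι_add_mul_swap x y)

theorem ι_add_smul_mul_ι_sub_smul (x y z : M) (c d : R) :
    ι R (x + d • z) * ι R (y - c • z) = ι R x * ι R y - ι R (c • x + d • y) * ι R z := by
  simp only [map_add, map_sub, map_smul, add_mul, mul_sub, smul_mul_assoc, mul_smul_comm,
    ι_mul_ι_eq_neg_swap z y, ι_sq_zero]
  module

theorem exists_ι_smul_add_smul_mul_ι_eq {c d : R} (hcd : IsCoprime c d) (x y : M) :
    ∃ z, ι R (c • x + d • y) * ι R z = ι R x * ι R y := by
  obtain ⟨s, t, bezout⟩ := hcd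
  refine ⟨s • y - t • x, ?_⟩
  calc ι R (c • x + d • y) * ι R (s • y - t • x)
      = (s * c + t * d) • (ι R x * ι R y) := by
        simp only [map_add, map_sub, map_smul, add_mul, mul_sub, smul_mul_assoc, mul_smul_comm,
          ι_mul_ι_eq_neg_swap y x, ι_sq_zero]
        module
    _ = ι R x * ι R y := by rw [bezout, one_smul]

theorem exists_sum_ι_mul_ι_eq_ι_mul_ι_add_sum {n : ℕ} (x y : Fin (n + 1) → M)
    {c d : Fin (n + 1) → R} {k : Fin (n + 1)} (hk : IsCoprime (c k) (d k)) :
    ∃ (z : M) (u v : Fin n → M), ∑ i, ι R (x i) * ι R (y i) =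
      ι R (∑ i, (c i • x i + d i • y i)) * ι R z + ∑ i, ι R (u i) * ι R (v i) := by
  obtain ⟨z, hz⟩ := exists_ι_smul_add_smul_mul_ι_eq hk (x k) (y k)
  have sum_shift : ∑ i, ι R (x i + d i • z) * ι R (y i - c i • z) =
      ∑ i, ι R (x i) * ι R (y i) - ι R (∑ i, (c i • x i + d i • y i)) * ι R z := by
    simp only [ι_add_smul_mul_ι_sub_smul, Finset.sum_sub_distrib, map_sum, Finset.sum_mul]
  have shift_eq_zero : ι R (x k + d k • z) * ι R (y k - c k • z) = 0 := by
    rw [ι_add_smul_mul_ι_sub_smul, hz, sub_self]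
  rw [Fin.sum_univ_succAbove _ k, shift_eq_zero, zero_add] at sum_shift
  exact ⟨z, _, _, (add_eq_of_eq_sub' sum_shift).symm⟩

end NormalForm

theorem stmt_12_general {K A : Type*} [Field K] [AddCommGroup A] [Module K A] (S : Submodule K A)
    {n : ℕ} (x y : Fin (n + 1) → A) (z w : Fin n → A ⧸ S)
    (hq : ExteriorAlgebra.map S.mkQ (∑ i, ι K (x i) * ι K (y i)) =
      ∑ j, ι K (z j) * ι K (w j)) :
    ∃ a ∈ S, ∃ (t : A) (u v : Fin n → A),
      ∑ i, ι K (x i) * ι K (y i) = ι K a * ι K t + ∑ j, ι K (u j) * ι K (v j) := by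
  simp only [map_sum, map_mul, ExteriorAlgebra.map_apply_ι] at hq
  obtain ⟨c, d, ⟨k, hk⟩, hcd⟩ := exists_sum_smul_add_smul_eq_zero (by simp) hq
  have ha : ∑ i, (c i • x i + d i • y i) ∈ S := by
    simpa only [← map_smul, ← map_add, ← map_sum, ← LinearMap.mem_ker, S.ker_mkQ] using hcd
  exact ⟨_, ha, exists_sum_ι_mul_ι_eq_ι_mul_ι_add_sum x y (Semifield.isCoprime_iff.mpr hk)⟩

/-- Normal form in Lemma 3.14: if `b ∈ Λ²A₇` has rank four
(`b = e₁ ∧ e₂ + e₃ ∧ e₄` with `e₁, e₂, e₃, e₄` linearly independent) and its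
image under `q : Λ²A → Λ²(A/A₂)` has rank two (`q(b) = w₁ ∧ w₂` with `w₁, w₂`
linearly independent), then `b = a ∧ x + a' ∧ y + u ∧ v` with `a, a' ∈ A₂` and
`y ∈ A₂ + span{u, v}`. -/
theorem stmt_12 (A : Type*) [AddCommGroup A] [Module ℂ A] [FiniteDimensional ℂ A]
    (hA : Module.finrank ℂ A = 7)
    (A₂ : Submodule ℂ A) (hA₂ : Module.finrank ℂ A₂ = 2)
    (b : ExteriorAlgebra ℂ A) (hb : b ∈ ⋀[ℂ]^2 A)
    (e₁ e₂ e₃ e₄ : A) (he : LinearIndependent ℂ ![e₁, e₂, e₃, e₄])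
    (hb4 : b = ι ℂ e₁ * ι ℂ e₂ + ι ℂ e₃ * ι ℂ e₄)
    (w₁ w₂ : A ⧸ A₂) (hw : LinearIndependent ℂ ![w₁, w₂])
    (hq : ExteriorAlgebra.map A₂.mkQ b = ι ℂ w₁ * ι ℂ w₂) :
    ∃ a a' x u v y : A, a ∈ A₂ ∧ a' ∈ A₂ ∧
      y ∈ A₂ ⊔ Submodule.span ℂ {u, v} ∧
      b = ι ℂ a * ι ℂ x + ι ℂ a' * ι ℂ y + ι ℂ u * ι ℂ v := by
  obtain ⟨a, ha, x, u, v, h⟩ :=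
    stmt_12_general A₂ ![e₁, e₃] ![e₂, e₄] ![w₁] ![w₂] (by simpa [hb4] using hq)
  exact ⟨a, 0, x, u 0, v 0, 0, ha, zero_mem _, zero_mem _, by simpa [hb4] using h⟩
end
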